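/- arXiv:1708.08432 — 2 statements merged into one kernel-verified Lean document; each statement's English description precedes it below -/
import Mathlib

section
/- Under Assumption 1, if the weights satisfy (W1) and (W2) and the lag-truncation constants satisfy m = m_n → ∞ with (m*)³/n_* → 0 as n → ∞, then the estimator σ̂²_n is weakly consistent for the asymptotic variance: for every ε > 0, P(‖σ̂²_n − σ²‖_∞ > ε) → 0 as n → ∞. -/
/-!
The entries of `σ̂²_n` are finite sums of sample autocovariances, so consistency splits into a
deterministic bias and a mean square error.

Bias: since `E γ̂_n(j) = γ(j)`, the mean is `∑_{|j| ≤ m} w_m(j) γ(j)`. The covariance inequality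
`|Cov(X, Y)| ≤ 2 √φ ‖X‖₂ ‖Y‖₂` (`cov_sq_le`) gives `‖γ(j)‖ = O(√φ(|j|))`, which is summable over
`ℤ^q` because spheres of radius `r` have `O(r^(q-1))` points; dominated convergence then yields the
limit `∑ γ(j)` (`tendsto_bias`).

Mean square error: for fixed `|j| ≤ M`, the products `ξ_i ξ_{i+j}` form a stationary field whose
covariances at distance `R` are `O(√φ(R - 2M))`. Their lattice sum is `O((M+1)^q)`
(`lattice_sum_le`), so `γ̂_n(j)` has mean square error `O(M^q / |Γ̃_n(j)|) = O(M^q / N^q)`, where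
`N = min n_i` (`mse_acovHat`). Cauchy–Schwarz over the `O(M^q)` lags gives `O((M³ / N)^q)` for the
estimator, and Chebyshev's inequality concludes (`prob_dev_le`).

The covariance inequality is proved for finitely valued variables by Cauchy–Schwarz with weights
`|P(X = a, Y = b) - P(X = a) P(Y = b)|`, and extended by approximation with simple functions.
Stationary functionals of the field are treated uniformly through `LocalFn`.
-/

open MeasureTheory Filter Finset Topology

noncomputable section

variable {Ω : Type*}

/-- σ-algebra generated by the field at sites whose `j`-th coordinate is `≤ r`. -/
def sigmaLE {d : ℕ} {E : Type*} [MeasurableSpace Ω] [MeasurableSpace E]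
    (ξ : (Fin d → ℤ) → Ω → E) (j : Fin d) (r : ℤ) : MeasurableSpace Ω :=
  ⨆ i ∈ {i : Fin d → ℤ | i j ≤ r}, MeasurableSpace.comap (ξ i) inferInstance

/-- σ-algebra generated by the field at sites whose `j`-th coordinate is `≥ r`. -/
def sigmaGE {d : ℕ} {E : Type*} [MeasurableSpace Ω] [MeasurableSpace E]
    (ξ : (Fin d → ℤ) → Ω → E) (j : Fin d) (r : ℤ) : MeasurableSpace Ω :=
  ⨆ i ∈ {i : Fin d → ℤ | r ≤ i j}, MeasurableSpace.comap (ξ i) inferInstance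

/-- φ-mixing coefficient in direction `j` at distance `r`. -/
def phiCoeff [MeasurableSpace Ω] {d : ℕ} {E : Type*} [MeasurableSpace E]
    (ξ : (Fin d → ℤ) → Ω → E) (P : Measure Ω) (j : Fin d) (r : ℤ) : ℝ :=
  sSup {x | ∃ A B : Set Ω, MeasurableSet[sigmaLE ξ j 0] A ∧ MeasurableSet[sigmaGE ξ j r] B ∧
    P A ≠ 0 ∧ x = |(P (A ∩ B)).toReal / (P A).toReal - (P B).toReal|}

/-- The (half-space) φ-mixing coefficient `φ(r)`, with the convention `φ(r) = 1` for `r ≤ 0`. -/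
def phiMix [MeasurableSpace Ω] {d : ℕ} {E : Type*} [MeasurableSpace E]
    (ξ : (Fin d → ℤ) → Ω → E) (P : Measure Ω) (r : ℤ) : ℝ :=
  if r ≤ 0 then 1 else ⨆ j : Fin d, phiCoeff ξ P j r

/-- Strict stationarity: all finite dimensional distributions are shift invariant. -/
def StrictStationary [MeasurableSpace Ω] {d : ℕ} {E : Type*} [MeasurableSpace E]
    (ξ : (Fin d → ℤ) → Ω → E) (P : Measure Ω) : Prop :=
  ∀ t : Fin d → ℤ,
    Measure.map (fun ω => (fun i => ξ (i + t) ω)) P = Measure.map (fun ω => (fun i => ξ i ω)) P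

/-- The index box `Γ_n = {1,…,n₁} × ⋯ × {1,…,n_d}`. -/
def box (d : ℕ) (n : Fin d → ℕ) : Finset (Fin d → ℤ) :=
  Finset.Icc 1 (fun i => (n i : ℤ))

/-- `Γ̃_n(j) = {i ∈ Γ_n : i + j ∈ Γ_n}`. -/
def boxJ (d : ℕ) (n : Fin d → ℕ) (j : Fin d → ℤ) : Finset (Fin d → ℤ) :=
  (box d n).filter (fun i => i + j ∈ box d n)

/-- The lag window `{j : |j_i| ≤ m_i ∀ i}`. -/
def lags (d : ℕ) (m : Fin d → ℕ) : Finset (Fin d → ℤ) :=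
  Finset.Icc (fun i => -(m i : ℤ)) (fun i => (m i : ℤ))

/-- Autocovariance matrix `γ(j) = E(ξ_0 ξ_jᵀ)`. -/
def acov [MeasurableSpace Ω] {d p : ℕ} (ξ : (Fin d → ℤ) → Ω → (Fin p → ℝ)) (P : Measure Ω)
    (j : Fin d → ℤ) : Fin p → Fin p → ℝ :=
  fun ν μ => ∫ ω, ξ 0 ω ν * ξ j ω μ ∂P

/-- Sample autocovariance `γ̂_n(j)`. -/
def acovHat {d p : ℕ} (ξ : (Fin d → ℤ) → Ω → (Fin p → ℝ)) (n : Fin d → ℕ) (j : Fin d → ℤ)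
    (ω : Ω) : Fin p → Fin p → ℝ :=
  fun ν μ => ((boxJ d n j).card : ℝ)⁻¹ * ∑ i ∈ boxJ d n j, ξ i ω ν * ξ (i + j) ω μ

/-- The estimator `σ̂²_n = ∑_{|j| ≤ m} w_m(j) γ̂_n(j)`. -/
def sigmaHat {d p : ℕ} (ξ : (Fin d → ℤ) → Ω → (Fin p → ℝ))
    (w : (Fin d → ℕ) → (Fin d → ℤ) → ℝ) (m n : Fin d → ℕ) (ω : Ω) : Fin p → Fin p → ℝ :=
  ∑ j ∈ lags d m, w m j • acovHat ξ n j ω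

/-! ### Covariance inequality under φ-mixing -/

/-- A finite signed array `d` whose rows have all partial sums bounded by `c` has
absolute row sum at most `2c`. -/
lemma sum_abs_le_of_subset {β : Type*} (T : Finset β) (d : β → ℝ) (c : ℝ)
    (h : ∀ B ⊆ T, |∑ b ∈ B, d b| ≤ c) : ∑ b ∈ T, |d b| ≤ 2 * c := by
  classical
  rw [← Finset.sum_filter_add_sum_filter_not T (fun b => 0 ≤ d b)]
  have h1 := h (T.filter (fun b => 0 ≤ d b)) (Finset.filter_subset _ _)
  have h2 := h (T.filter (fun b => ¬ 0 ≤ d b)) (Finset.filter_subset _ _)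
  have e1 : ∑ b ∈ T.filter (fun b => 0 ≤ d b), |d b|
      = ∑ b ∈ T.filter (fun b => 0 ≤ d b), d b :=
    Finset.sum_congr rfl fun b hb => abs_of_nonneg (Finset.mem_filter.1 hb).2
  have e2 : ∑ b ∈ T.filter (fun b => ¬ 0 ≤ d b), |d b|
      = - ∑ b ∈ T.filter (fun b => ¬ 0 ≤ d b), d b := by
    rw [← Finset.sum_neg_distrib]
    exact Finset.sum_congr rfl fun b hb =>
      abs_of_neg (not_le.1 (Finset.mem_filter.1 hb).2)
  rw [e1, e2]
  linarith [(abs_le.1 h1).2, (abs_le.1 h2).1]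

/-- Expectation of a function of two random variables with finitely many values. -/
lemma integral_finite_pair [MeasurableSpace Ω] (P : Measure Ω) [IsProbabilityMeasure P]
    {X Y : Ω → ℝ} (hX : Measurable X) (hY : Measurable Y) (S T : Finset ℝ)
    (hS : ∀ ω, X ω ∈ S) (hT : ∀ ω, Y ω ∈ T) (g : ℝ → ℝ → ℝ) :
    ∫ ω, g (X ω) (Y ω) ∂P =
      ∑ a ∈ S, ∑ b ∈ T, P.real (X ⁻¹' {a} ∩ Y ⁻¹' {b}) * g a b := by
  classical
  have hm : ∀ a b, MeasurableSet (X ⁻¹' {a} ∩ Y ⁻¹' {b}) := fun a b =>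
    (hX (measurableSet_singleton a)).inter (hY (measurableSet_singleton b))
  have e : (fun ω => g (X ω) (Y ω)) = fun ω => ∑ a ∈ S, ∑ b ∈ T,
      (X ⁻¹' {a} ∩ Y ⁻¹' {b}).indicator (fun _ => g a b) ω := by
    funext ω
    rw [Finset.sum_eq_single (X ω), Finset.sum_eq_single (Y ω)]
    · simp
    · intro b _ hb
      simp [Set.indicator, Ne.symm hb]
    · intro h; exact absurd (hT ω) h
    · intro a _ ha
      refine Finset.sum_eq_zero fun b _ => ?_
      simp [Set.indicator, Ne.symm ha]
    · intro h; exact absurd (hS ω) h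
  have hi : ∀ a b, Integrable ((X ⁻¹' {a} ∩ Y ⁻¹' {b}).indicator (fun _ => g a b)) P :=
    fun a b => (integrable_const _).indicator (hm a b)
  rw [e, integral_finsetSum _ fun a _ => integrable_finsetSum _ fun b _ => hi a b]
  refine Finset.sum_congr rfl fun a _ => ?_
  rw [integral_finsetSum _ fun b _ => hi a b]
  refine Finset.sum_congr rfl fun b _ => ?_
  rw [integral_indicator_const _ (hm a b), smul_eq_mul]

/-- Covariance inequality for finitely valued variables. The signed array
`d(a,b) = P(X = a, Y = b) - P(X = a) P(Y = b)` has absolute row sums at most `2φ P(X = a)` and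
absolute column sums at most `2 P(Y = b)`; Cauchy–Schwarz for the weights `|d|` does the rest. -/
lemma cov_sq_le_finite {mA mB mΩ : MeasurableSpace Ω} (P : Measure Ω)
    [IsProbabilityMeasure P] (φ : ℝ)
    (hA : mA ≤ mΩ) (hB : mB ≤ mΩ)
    (hφ : ∀ A B : Set Ω, MeasurableSet[mA] A → MeasurableSet[mB] B →
      |P.real (A ∩ B) - P.real A * P.real B| ≤ φ * P.real A)
    {X Y : Ω → ℝ} (hX : Measurable[mA] X) (hY : Measurable[mB] Y) (S T : Finset ℝ)
    (hS : ∀ ω, X ω ∈ S) (hT : ∀ ω, Y ω ∈ T) :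
    (∫ ω, X ω * Y ω ∂P - (∫ ω, X ω ∂P) * ∫ ω, Y ω ∂P) ^ 2
      ≤ 4 * φ * (∫ ω, X ω ^ 2 ∂P) * ∫ ω, Y ω ^ 2 ∂P := by
  classical
  have hX0 : Measurable X := hX.mono hA le_rfl
  have hY0 : Measurable Y := hY.mono hB le_rfl
  have key := integral_finite_pair P hX0 hY0 S T hS hT
  set pr : ℝ → ℝ → ℝ := fun a b => P.real (X ⁻¹' {a} ∩ Y ⁻¹' {b}) with hpr
  set pa : ℝ → ℝ := fun a => P.real (X ⁻¹' {a}) with hpa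
  set pb : ℝ → ℝ := fun b => P.real (Y ⁻¹' {b}) with hpb
  have hinter : ∀ (a : ℝ) (B : Finset ℝ),
      P.real (X ⁻¹' {a} ∩ Y ⁻¹' (B : Set ℝ)) = ∑ b ∈ B, pr a b := by
    intro a B
    have : X ⁻¹' {a} ∩ Y ⁻¹' (B : Set ℝ) = ⋃ b ∈ B, (X ⁻¹' {a} ∩ Y ⁻¹' {b}) := by
      ext ω; simp
    rw [this, measureReal_biUnion_finset]
    · intro b _ c _ hbc
      refine Set.disjoint_left.2 fun ω h1 h2 => hbc ?_
      exact h1.2.symm.trans h2.2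
    · exact fun b _ => (hX0 (measurableSet_singleton a)).inter (hY0 (measurableSet_singleton b))
  have hinter' : ∀ (B : Finset ℝ), P.real (Y ⁻¹' (B : Set ℝ)) = ∑ b ∈ B, pb b := by
    intro B
    have : Y ⁻¹' (B : Set ℝ) = ⋃ b ∈ B, (Y ⁻¹' {b}) := by
      ext ω; simp
    rw [this, measureReal_biUnion_finset]
    · intro b _ c _ hbc
      refine Set.disjoint_left.2 fun ω h1 h2 => hbc ?_
      exact h1.symm.trans h2
    · exact fun b _ => hY0 (measurableSet_singleton b)
  have hpaS : ∀ a, ∑ b ∈ T, pr a b = pa a := by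
    intro a
    rw [← hinter a T]
    have : Y ⁻¹' (T : Set ℝ) = Set.univ := by ext ω; simp [hT ω]
    rw [this, Set.inter_univ]
  have hpbS : ∀ b, ∑ a ∈ S, pr a b = pb b := by
    intro b
    have : Y ⁻¹' {b} = ⋃ a ∈ S, (X ⁻¹' {a} ∩ Y ⁻¹' {b}) := by
      ext ω; simp [hS ω]
    rw [hpb]
    simp only
    rw [this, measureReal_biUnion_finset]
    · intro a _ c _ hac
      refine Set.disjoint_left.2 fun ω h1 h2 => hac ?_
      exact h1.1.symm.trans h2.1
    · exact fun a _ => (hX0 (measurableSet_singleton a)).inter (hY0 (measurableSet_singleton b))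
  have hpa1 : ∑ a ∈ S, pa a = 1 := by
    have := key (fun _ _ => 1)
    simp only [integral_const, probReal_univ, smul_eq_mul, mul_one] at this
    rw [this]
    exact Finset.sum_congr rfl fun a _ => (hpaS a).symm
  have hpr0 : ∀ a b, 0 ≤ pr a b := fun a b => measureReal_nonneg
  have hpa0 : ∀ a, 0 ≤ pa a := fun a => measureReal_nonneg
  have hpb0 : ∀ b, 0 ≤ pb b := fun b => measureReal_nonneg
  have EX : ∀ f : ℝ → ℝ, ∫ ω, f (X ω) ∂P = ∑ a ∈ S, pa a * f a := by
    intro f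
    rw [key (fun a _ => f a)]
    exact Finset.sum_congr rfl fun a _ => by rw [← Finset.sum_mul, ← hpaS a]
  have EY : ∀ f : ℝ → ℝ, ∫ ω, f (Y ω) ∂P = ∑ b ∈ T, pb b * f b := by
    intro f
    rw [key (fun _ b => f b), Finset.sum_comm]
    exact Finset.sum_congr rfl fun b _ => by rw [← Finset.sum_mul, ← hpbS b]
  set d : ℝ → ℝ → ℝ := fun a b => pr a b - pa a * pb b with hd
  have hcov : ∫ ω, X ω * Y ω ∂P - (∫ ω, X ω ∂P) * ∫ ω, Y ω ∂P
      = ∑ x ∈ S ×ˢ T, x.1 * x.2 * d x.1 x.2 := by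
    rw [key (fun a b => a * b), EX (fun x => x), EY (fun x => x), Finset.sum_mul_sum,
      ← Finset.sum_sub_distrib, Finset.sum_product]
    refine Finset.sum_congr rfl fun a _ => ?_
    rw [← Finset.sum_sub_distrib]
    refine Finset.sum_congr rfl fun b _ => ?_
    simp only [hd, hpr]; ring
  have hrow : ∀ a, ∑ b ∈ T, |d a b| ≤ 2 * (φ * pa a) := by
    intro a
    refine sum_abs_le_of_subset T _ _ fun B _ => ?_
    have := hφ (X ⁻¹' {a}) (Y ⁻¹' (B : Set ℝ)) (hX (measurableSet_singleton a))
      (hY B.measurableSet)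
    rw [hinter, hinter', Finset.mul_sum, ← Finset.sum_sub_distrib] at this
    exact this
  have hcol : ∀ b, ∑ a ∈ S, |d a b| ≤ 2 * pb b := by
    intro b
    calc ∑ a ∈ S, |d a b| ≤ ∑ a ∈ S, (pr a b + pa a * pb b) := by
          refine Finset.sum_le_sum fun a _ => ?_
          have h1 := hpr0 a b
          have h2 := mul_nonneg (hpa0 a) (hpb0 b)
          exact abs_le.2 ⟨by simp only [hd]; linarith, by simp only [hd]; linarith⟩
      _ = 2 * pb b := by
          rw [Finset.sum_add_distrib, hpbS, ← Finset.sum_mul, hpa1]; ring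
  have hφ0 : 0 ≤ φ := by
    have := hφ Set.univ Set.univ MeasurableSet.univ MeasurableSet.univ
    simpa using this
  have hCS := Finset.sum_sq_le_sum_mul_sum_of_sq_le_mul (S ×ˢ T)
    (r := fun x => x.1 * x.2 * d x.1 x.2)
    (f := fun x => x.1 ^ 2 * |d x.1 x.2|) (g := fun x => x.2 ^ 2 * |d x.1 x.2|)
    (fun x _ => by positivity) (fun x _ => by positivity)
    (fun x _ => by
      have : |d x.1 x.2| ^ 2 = d x.1 x.2 ^ 2 := sq_abs _
      refine le_of_eq ?_
      linear_combination (-(x.1 ^ 2 * x.2 ^ 2)) * this)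
  have hf : ∑ x ∈ S ×ˢ T, x.1 ^ 2 * |d x.1 x.2| ≤ 2 * φ * ∫ ω, X ω ^ 2 ∂P := by
    rw [Finset.sum_product, EX (fun x => x ^ 2), Finset.mul_sum]
    refine Finset.sum_le_sum fun a _ => ?_
    simp only
    rw [← Finset.mul_sum]
    nlinarith [mul_le_mul_of_nonneg_left (hrow a) (sq_nonneg a)]
  have hg : ∑ x ∈ S ×ˢ T, x.2 ^ 2 * |d x.1 x.2| ≤ 2 * ∫ ω, Y ω ^ 2 ∂P := by
    rw [Finset.sum_product_right, EY (fun x => x ^ 2), Finset.mul_sum]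
    refine Finset.sum_le_sum fun b _ => ?_
    simp only
    rw [← Finset.mul_sum]
    nlinarith [mul_le_mul_of_nonneg_left (hcol b) (sq_nonneg b)]
  rw [hcov]
  refine hCS.trans ?_
  calc _ ≤ (2 * φ * ∫ ω, X ω ^ 2 ∂P) * (2 * ∫ ω, Y ω ^ 2 ∂P) :=
        mul_le_mul hf hg (Finset.sum_nonneg fun x _ => by positivity)
          (mul_nonneg (by positivity) (integral_nonneg fun ω => sq_nonneg _))
    _ = _ := by ring

/-- Ibragimov's covariance inequality for square integrable variables, obtained from the
finitely valued case by approximation with simple functions. -/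
lemma cov_sq_le {mA mB mΩ : MeasurableSpace Ω} (P : Measure Ω)
    [IsProbabilityMeasure P] (φ : ℝ)
    (hA : mA ≤ mΩ) (hB : mB ≤ mΩ)
    (hφ : ∀ A B : Set Ω, MeasurableSet[mA] A → MeasurableSet[mB] B →
      |P.real (A ∩ B) - P.real A * P.real B| ≤ φ * P.real A)
    {X Y : Ω → ℝ} (hX : Measurable[mA] X) (hY : Measurable[mB] Y)
    (hX2 : MemLp X 2 P) (hY2 : MemLp Y 2 P) :
    (∫ ω, X ω * Y ω ∂P - (∫ ω, X ω ∂P) * ∫ ω, Y ω ∂P) ^ 2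
      ≤ 4 * φ * (∫ ω, X ω ^ 2 ∂P) * ∫ ω, Y ω ^ 2 ∂P := by
  have approx : ∀ (m : MeasurableSpace Ω) (Z : Ω → ℝ), Measurable[m] Z →
      ∃ Zn : ℕ → Ω → ℝ, (∀ n, Measurable[m] (Zn n)) ∧ (∀ n, ∃ S : Finset ℝ, ∀ ω, Zn n ω ∈ S) ∧
        (∀ ω, Tendsto (fun n => Zn n ω) atTop (𝓝 (Z ω))) ∧ ∀ n ω, |Zn n ω| ≤ 2 * |Z ω| := by
    intro m Z hZ
    refine ⟨fun n => SimpleFunc.approxOn Z hZ Set.univ 0 (Set.mem_univ _) n, fun n =>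
      SimpleFunc.measurable _, fun n => ⟨(SimpleFunc.approxOn Z hZ Set.univ 0 (Set.mem_univ _) n).range,
      fun ω => SimpleFunc.mem_range_self _ _⟩, fun ω => ?_, fun n ω => ?_⟩
    · exact SimpleFunc.tendsto_approxOn hZ (Set.mem_univ _) (by simp)
    · have := SimpleFunc.norm_approxOn_zero_le hZ (Set.mem_univ (0 : ℝ)) ω n
      simp only [Real.norm_eq_abs] at this
      linarith
  -- The dominating functions below come from `|Xn| ≤ 2|X|` and `|Yn| ≤ 2|Y|`.
  obtain ⟨Xn, hXm, hXS, hXt, hXb⟩ := approx mA X hX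
  obtain ⟨Yn, hYm, hYS, hYt, hYb⟩ := approx mB Y hY
  have lim : ∀ (U : ℕ → Ω → ℝ) (V G : Ω → ℝ), (∀ n, Measurable (U n)) → Integrable G P →
      (∀ n ω, |U n ω| ≤ G ω) → (∀ ω, Tendsto (fun n => U n ω) atTop (𝓝 (V ω))) →
      Tendsto (fun n => ∫ ω, U n ω ∂P) atTop (𝓝 (∫ ω, V ω ∂P)) := by
    intro U V G hU hG hb ht
    exact tendsto_integral_of_dominated_convergence G (fun n => (hU n).aestronglyMeasurable) hG
      (fun n => Eventually.of_forall (hb n)) (Eventually.of_forall ht)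
  have hXm0 := fun n => (hXm n).mono hA le_rfl
  have hYm0 := fun n => (hYm n).mono hB le_rfl
  have hX1 : Integrable X P := hX2.integrable one_le_two
  have hY1 : Integrable Y P := hY2.integrable one_le_two
  have sqb : ∀ u v : ℝ, |u| ≤ 2 * |v| → |u ^ 2| ≤ 4 * v ^ 2 := by
    intro u v h
    rw [abs_pow, ← sq_abs v]
    nlinarith [abs_nonneg u, abs_nonneg v]
  have L1 := lim (fun n ω => Xn n ω * Yn n ω) (fun ω => X ω * Y ω) (fun ω => 4 * |X ω * Y ω|)
    (fun n => (hXm0 n).mul (hYm0 n)) ((hX2.integrable_mul hY2).abs.const_mul 4)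
    (fun n ω => by
      rw [abs_mul, abs_mul]
      have := mul_le_mul (hXb n ω) (hYb n ω) (abs_nonneg _) (by positivity)
      linarith) (fun ω => (hXt ω).mul (hYt ω))
  have L2 := lim Xn X (fun ω => 2 * |X ω|) hXm0 (hX1.abs.const_mul 2) hXb hXt
  have L3 := lim Yn Y (fun ω => 2 * |Y ω|) hYm0 (hY1.abs.const_mul 2) hYb hYt
  have L4 := lim (fun n ω => Xn n ω ^ 2) (fun ω => X ω ^ 2) (fun ω => 4 * X ω ^ 2)
    (fun n => (hXm0 n).pow_const 2) (hX2.integrable_sq.const_mul 4)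
    (fun n ω => sqb _ _ (hXb n ω)) (fun ω => (hXt ω).pow 2)
  have L5 := lim (fun n ω => Yn n ω ^ 2) (fun ω => Y ω ^ 2) (fun ω => 4 * Y ω ^ 2)
    (fun n => (hYm0 n).pow_const 2) (hY2.integrable_sq.const_mul 4)
    (fun n ω => sqb _ _ (hYb n ω)) (fun ω => (hYt ω).pow 2)
  refine le_of_tendsto_of_tendsto ((L1.sub (L2.mul L3)).pow 2)
    ((L4.const_mul (4 * φ)).mul L5) (Eventually.of_forall fun n => ?_)
  obtain ⟨S, hS⟩ := hXS n
  obtain ⟨T, hT⟩ := hYS n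
  exact cov_sq_le_finite P φ hA hB hφ (hXm n) (hYm n) S T hS hT

/-! ### Lattice sums -/

/-- The sup norm of a site, as a natural number. -/
def siteNorm {q : ℕ} (d : Fin q → ℤ) : ℕ := Finset.univ.sup fun k => (d k).natAbs

lemma natAbs_le_siteNorm {q : ℕ} (d : Fin q → ℤ) (k : Fin q) : (d k).natAbs ≤ siteNorm d :=
  Finset.le_sup (f := fun k => (d k).natAbs) (Finset.mem_univ k)

lemma siteNorm_le {q : ℕ} {d : Fin q → ℤ} {M : ℕ} (h : ∀ k, (d k).natAbs ≤ M) :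
    siteNorm d ≤ M :=
  Finset.sup_le fun k _ => h k

lemma exists_natAbs_eq_siteNorm {q : ℕ} [Nonempty (Fin q)] (d : Fin q → ℤ) :
    ∃ k, (d k).natAbs = siteNorm d := by
  obtain ⟨k, -, hk⟩ := Finset.exists_mem_eq_sup Finset.univ Finset.univ_nonempty
    fun k => (d k).natAbs
  exact ⟨k, hk.symm⟩

lemma card_le_ball {q : ℕ} (F : Finset (Fin q → ℤ)) (R : ℕ) (hF : ∀ d ∈ F, siteNorm d ≤ R) :
    F.card ≤ (2 * R + 1) ^ q := by
  classical
  have hsub : F ⊆ Fintype.piFinset fun _ : Fin q => Finset.Icc (-(R : ℤ)) R := by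
    intro d hd
    rw [Fintype.mem_piFinset]
    intro k
    have := (natAbs_le_siteNorm d k).trans (hF d hd)
    rw [Finset.mem_Icc]; omega
  refine (Finset.card_le_card hsub).trans ?_
  rw [Fintype.card_piFinset]
  simp only [Int.card_Icc, Finset.prod_const, Finset.card_univ, Fintype.card_fin]
  refine Nat.pow_le_pow_left ?_ q
  omega

/-- A sphere of radius `R` in `ℤ^q` is covered by the `2q` faces of the cube. -/
lemma card_le_sphere {q : ℕ} [Nonempty (Fin q)] (F : Finset (Fin q → ℤ)) (R : ℕ)
    (hF : ∀ d ∈ F, siteNorm d = R) :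
    F.card ≤ 2 * q * (2 * R + 1) ^ (q - 1) := by
  classical
  let face : Fin q → Finset (Fin q → ℤ) := fun k =>
    Fintype.piFinset (Function.update (fun _ : Fin q => Finset.Icc (-(R : ℤ)) R) k {(R : ℤ), -(R : ℤ)})
  have hsub : F ⊆ Finset.univ.biUnion face := by
    intro d hd
    obtain ⟨k, hk⟩ := exists_natAbs_eq_siteNorm d
    rw [hF d hd] at hk
    refine Finset.mem_biUnion.2 ⟨k, Finset.mem_univ _, Fintype.mem_piFinset.2 fun l => ?_⟩
    by_cases h : l = k
    · subst h
      simp only [Function.update_self, Finset.mem_insert, Finset.mem_singleton]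
      omega
    · rw [Function.update_of_ne h, Finset.mem_Icc]
      have := (natAbs_le_siteNorm d l)
      rw [hF d hd] at this
      omega
  have hface : ∀ k, (face k).card ≤ 2 * (2 * R + 1) ^ (q - 1) := by
    intro k
    simp only [face]
    rw [Fintype.card_piFinset, ← Finset.mul_prod_erase _ _ (Finset.mem_univ k),
      Function.update_self]
    refine Nat.mul_le_mul Finset.card_le_two ?_
    refine (Finset.prod_le_pow_card _ _ (2 * R + 1) ?_).trans ?_
    · intro l hl
      rw [Function.update_of_ne (Finset.ne_of_mem_erase hl), Int.card_Icc]
      omega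
    · simp
  refine (Finset.card_le_card hsub).trans (Finset.card_biUnion_le.trans ?_)
  refine (Finset.sum_le_sum fun k _ => hface k).trans ?_
  simp only [Finset.sum_const, Finset.card_univ, Fintype.card_fin, smul_eq_mul]
  exact le_of_eq (by ring)

/-- Lattice sums of a radial function, shifted radially by `2M`, grow at most like `(M+1)^q`:
the ball of radius `2M` has `(4M+1)^q` points, and a sphere of radius `r + 2M` has
`O((r + M)^(q-1))` points, which is `O((M+1)^(q-1) r^(q-1))` for `r ≥ 1`. -/
lemma lattice_sum_le {q : ℕ} [Nonempty (Fin q)] (s : ℤ → ℝ) (hs0 : ∀ r, 0 ≤ s r)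
    (hs1 : ∀ r ≤ 0, s r ≤ 1)
    (hsum : Summable fun r : ℕ => (r : ℝ) ^ (q - 1) * s r) :
    ∃ C : ℝ, 0 ≤ C ∧ ∀ (M : ℕ) (F : Finset (Fin q → ℤ)),
      ∑ d ∈ F, s ((siteNorm d : ℤ) - 2 * M) ≤ C * ((M : ℝ) + 1) ^ q := by
  classical
  set T := ∑' r : ℕ, (r : ℝ) ^ (q - 1) * s r with hT
  have hterm : ∀ r : ℕ, 0 ≤ (r : ℝ) ^ (q - 1) * s r := fun r => mul_nonneg (by positivity) (hs0 _)
  have hT0 : 0 ≤ T := tsum_nonneg hterm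
  refine ⟨4 ^ q + 2 * q * 7 ^ (q - 1) * T, by positivity, fun M F => ?_⟩
  rw [← Finset.sum_filter_add_sum_filter_not F (fun d => siteNorm d ≤ 2 * M), add_mul]
  refine add_le_add ?_ ?_
  · calc ∑ d ∈ F with siteNorm d ≤ 2 * M, s ((siteNorm d : ℤ) - 2 * M)
        ≤ ∑ d ∈ F with siteNorm d ≤ 2 * M, (1 : ℝ) := by
          refine Finset.sum_le_sum fun d hd => hs1 _ ?_
          have := (Finset.mem_filter.1 hd).2
          omega
      _ = ((F.filter fun d => siteNorm d ≤ 2 * M).card : ℝ) := by simp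
      _ ≤ (((2 * (2 * M) + 1) ^ q : ℕ) : ℝ) := by
          exact_mod_cast card_le_ball _ (2 * M) fun d hd => (Finset.mem_filter.1 hd).2
      _ ≤ (4 * ((M : ℝ) + 1)) ^ q := by
          push_cast
          refine pow_le_pow_left₀ (by positivity) ?_ q
          linarith
      _ = _ := mul_pow _ _ _
  · set G := F.filter fun d => ¬ siteNorm d ≤ 2 * M with hG
    have hGd : ∀ d ∈ G, 2 * M < siteNorm d := fun d hd => not_le.1 (Finset.mem_filter.1 hd).2
    have hmaps : ∀ d ∈ G, siteNorm d - 2 * M ∈ G.image fun d => siteNorm d - 2 * M :=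
      fun d hd => Finset.mem_image_of_mem _ hd
    rw [← Finset.sum_fiberwise_of_maps_to hmaps]
    calc _ ≤ ∑ r ∈ G.image (fun d => siteNorm d - 2 * M),
          2 * q * 7 ^ (q - 1) * ((M : ℝ) + 1) ^ (q - 1) * ((r : ℝ) ^ (q - 1) * s r) := by
          refine Finset.sum_le_sum fun r hr => ?_
          obtain ⟨d0, hd0, hd0r⟩ := Finset.mem_image.1 hr
          have hr1 : 1 ≤ r := by have := hGd d0 hd0; omega
          have hN : ∀ d ∈ G.filter (fun d => siteNorm d - 2 * M = r),
              siteNorm d = r + 2 * M := by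
            intro d hd
            have h1 := hGd d (Finset.mem_filter.1 hd).1
            have h2 := (Finset.mem_filter.1 hd).2
            omega
          calc _ = ∑ d ∈ G with siteNorm d - 2 * M = r, s r := by
                refine Finset.sum_congr rfl fun d hd => ?_
                rw [hN d hd]; congr 1; push_cast; ring
            _ = ((G.filter fun d => siteNorm d - 2 * M = r).card : ℝ) * s r := by simp
            _ ≤ ((2 * q * (2 * (r + 2 * M) + 1) ^ (q - 1) : ℕ) : ℝ) * s r := by
                refine mul_le_mul_of_nonneg_right ?_ (hs0 _)
                exact_mod_cast card_le_sphere _ (r + 2 * M) hN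
            _ ≤ (2 * q * (7 * ((M : ℝ) + 1) * r) ^ (q - 1)) * s r := by
                refine mul_le_mul_of_nonneg_right ?_ (hs0 _)
                push_cast
                refine mul_le_mul_of_nonneg_left ?_ (by positivity)
                refine pow_le_pow_left₀ (by positivity) ?_ _
                have h1 : (1 : ℝ) ≤ r := by exact_mod_cast hr1
                have h2 : (0 : ℝ) ≤ M := by positivity
                nlinarith
            _ = _ := by rw [mul_pow, mul_pow]; ring
      _ = 2 * q * 7 ^ (q - 1) * ((M : ℝ) + 1) ^ (q - 1) *
            ∑ r ∈ G.image (fun d => siteNorm d - 2 * M), (r : ℝ) ^ (q - 1) * s r := by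
          rw [Finset.mul_sum]
      _ ≤ 2 * q * 7 ^ (q - 1) * ((M : ℝ) + 1) ^ q * T := by
          refine mul_le_mul ?_ (hsum.sum_le_tsum _ fun r _ => hterm r)
            (Finset.sum_nonneg fun r _ => hterm r) (by positivity)
          refine mul_le_mul_of_nonneg_left ?_ (by positivity)
          exact pow_le_pow_right₀ (by linarith [(Nat.cast_nonneg M : (0 : ℝ) ≤ M)]) (Nat.sub_le _ _)
      _ = _ := by ring

/-! ### Covariances of local functionals -/

section Field

variable {q : ℕ} {E : Type*} [MeasurableSpace E]

lemma sigmaLE_le [MeasurableSpace Ω] {ξ : (Fin q → ℤ) → Ω → E} (hmeas : ∀ i, Measurable (ξ i))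
    (j : Fin q) (r : ℤ) : sigmaLE ξ j r ≤ ‹MeasurableSpace Ω› :=
  iSup₂_le fun i _ => (hmeas i).comap_le

lemma sigmaGE_le [MeasurableSpace Ω] {ξ : (Fin q → ℤ) → Ω → E} (hmeas : ∀ i, Measurable (ξ i))
    (j : Fin q) (r : ℤ) : sigmaGE ξ j r ≤ ‹MeasurableSpace Ω› :=
  iSup₂_le fun i _ => (hmeas i).comap_le

lemma measurable_sigmaLE [MeasurableSpace Ω] (ξ : (Fin q → ℤ) → Ω → E) {j : Fin q} {r : ℤ}
    {i : Fin q → ℤ} (hi : i j ≤ r) : Measurable[sigmaLE ξ j r] (ξ i) :=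
  (comap_measurable (ξ i)).mono
    (le_iSup₂ (f := fun (i : Fin q → ℤ) (_ : i ∈ {i : Fin q → ℤ | i j ≤ r}) =>
      MeasurableSpace.comap (ξ i) inferInstance) i hi) le_rfl

lemma measurable_sigmaGE [MeasurableSpace Ω] (ξ : (Fin q → ℤ) → Ω → E) {j : Fin q} {r : ℤ}
    {i : Fin q → ℤ} (hi : r ≤ i j) : Measurable[sigmaGE ξ j r] (ξ i) :=
  (comap_measurable (ξ i)).mono
    (le_iSup₂ (f := fun (i : Fin q → ℤ) (_ : i ∈ {i : Fin q → ℤ | r ≤ i j}) =>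
      MeasurableSpace.comap (ξ i) inferInstance) i hi) le_rfl

lemma phiCoeff_nonneg [MeasurableSpace Ω] (ξ : (Fin q → ℤ) → Ω → E) (P : Measure Ω) (j : Fin q)
    (r : ℤ) : 0 ≤ phiCoeff ξ P j r := by
  refine Real.sSup_nonneg ?_
  rintro x ⟨A, B, -, -, -, rfl⟩
  exact abs_nonneg _

lemma phiMix_nonneg [MeasurableSpace Ω] (ξ : (Fin q → ℤ) → Ω → E) (P : Measure Ω) (r : ℤ) :
    0 ≤ phiMix ξ P r := by
  unfold phiMix
  split_ifs
  · exact zero_le_one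
  · exact Real.iSup_nonneg fun j => phiCoeff_nonneg ξ P j r

/-- The product form of the mixing inequality. For `r ≤ 0` it is the trivial bound
`|P(A ∩ B) - P(A)P(B)| ≤ P(A)`. -/
lemma phiMix_spec [MeasurableSpace Ω] (ξ : (Fin q → ℤ) → Ω → E) (P : Measure Ω)
    [IsProbabilityMeasure P] (j : Fin q) (r : ℤ) (A B : Set Ω)
    (hA : MeasurableSet[sigmaLE ξ j 0] A) (hB : MeasurableSet[sigmaGE ξ j r] B) :
    |P.real (A ∩ B) - P.real A * P.real B| ≤ phiMix ξ P r * P.real A := by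
  have trivial_bound : ∀ A B : Set Ω, |P.real (A ∩ B) - P.real A * P.real B| ≤ P.real A := by
    intro A B
    have h1 : P.real (A ∩ B) ≤ P.real A := measureReal_mono Set.inter_subset_left
    have h2 : 0 ≤ P.real (A ∩ B) := measureReal_nonneg
    have h3 : 0 ≤ P.real A * P.real B := mul_nonneg measureReal_nonneg measureReal_nonneg
    have h4 : P.real A * P.real B ≤ P.real A :=
      mul_le_of_le_one_right measureReal_nonneg measureReal_le_one
    exact abs_le.2 ⟨by linarith, by linarith⟩
  unfold phiMix
  split_ifs with hr
  · rw [one_mul]; exact trivial_bound A B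
  · by_cases hPA : P A = 0
    · have : P.real A = 0 := by simp [Measure.real, hPA]
      have h := trivial_bound A B
      rw [this] at h ⊢
      simpa using h
    · have hpos : 0 < P.real A := ENNReal.toReal_pos hPA (measure_ne_top _ _)
      have eq : ∀ A B : Set Ω, P A ≠ 0 → |(P (A ∩ B)).toReal / (P A).toReal - (P B).toReal|
          = |P.real (A ∩ B) - P.real A * P.real B| / P.real A := by
        intro A B hPA
        have hpos : 0 < P.real A := ENNReal.toReal_pos hPA (measure_ne_top _ _)
        rw [← abs_of_pos hpos, ← abs_div, abs_of_pos hpos]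
        congr 1
        simp only [Measure.real] at hpos ⊢
        field_simp
      have hle : |P.real (A ∩ B) - P.real A * P.real B| / P.real A ≤ phiCoeff ξ P j r := by
        refine le_csSup ⟨1, ?_⟩ ⟨A, B, hA, hB, hPA, (eq A B hPA).symm⟩
        rintro x ⟨A', B', -, -, hPA', rfl⟩
        rw [eq A' B' hPA']
        exact div_le_one_of_le₀ (trivial_bound A' B') measureReal_nonneg
      have hle2 : phiCoeff ξ P j r ≤ ⨆ j, phiCoeff ξ P j r :=
        le_ciSup (f := fun j => phiCoeff ξ P j r) (Set.finite_range _).bddAbove j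
      exact (div_le_iff₀ hpos).1 (hle.trans hle2)

/-- `F` is a functional of configurations on `ℤ^q` that only looks at the sites of norm at most
`M`, expressed through measurability: whenever a random configuration on `Ω` is measurable at
those sites for some σ-algebra on `Ω`, so is its image under `F`. -/
def LocalFn (Ω : Type*) {q : ℕ} {E : Type*} [MeasurableSpace E] (M : ℕ)
    (F : ((Fin q → ℤ) → E) → ℝ) : Prop :=
  ∀ (m : MeasurableSpace Ω) (x : Ω → (Fin q → ℤ) → E),
    (∀ u, siteNorm u ≤ M → Measurable[m] fun ω => x ω u) → Measurable[m] fun ω => F (x ω)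

lemma integral_shift [MeasurableSpace Ω] {P : Measure Ω} {ξ : (Fin q → ℤ) → Ω → E}
    (hmeas : ∀ i, Measurable (ξ i)) (hstat : StrictStationary ξ P)
    {F : ((Fin q → ℤ) → E) → ℝ} (hF : Measurable F) (t : Fin q → ℤ) :
    ∫ ω, F (fun u => ξ (u + t) ω) ∂P = ∫ ω, F (fun u => ξ u ω) ∂P := by
  have h1 : Measurable fun ω => fun u => ξ (u + t) ω := measurable_pi_lambda _ fun u => hmeas _
  have h2 : Measurable fun ω => fun u => ξ u ω := measurable_pi_lambda _ fun u => hmeas _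
  rw [← integral_map (φ := fun ω => fun u => ξ (u + t) ω) h1.aemeasurable
    hF.aestronglyMeasurable, hstat t, integral_map h2.aemeasurable hF.aestronglyMeasurable]

lemma integrable_shift [MeasurableSpace Ω] {P : Measure Ω} {ξ : (Fin q → ℤ) → Ω → E}
    (hmeas : ∀ i, Measurable (ξ i)) (hstat : StrictStationary ξ P)
    {F : ((Fin q → ℤ) → E) → ℝ} (hF : Measurable F) (t : Fin q → ℤ)
    (hi : Integrable (fun ω => F (fun u => ξ u ω)) P) :
    Integrable (fun ω => F (fun u => ξ (u + t) ω)) P := by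
  have h1 : Measurable fun ω => fun u => ξ (u + t) ω := measurable_pi_lambda _ fun u => hmeas _
  have h2 : Measurable fun ω => fun u => ξ u ω := measurable_pi_lambda _ fun u => hmeas _
  have := (integrable_map_measure hF.aestronglyMeasurable h1.aemeasurable (μ := P)).1
  refine this ?_
  rw [hstat t]
  exact (integrable_map_measure hF.aestronglyMeasurable h2.aemeasurable (μ := P)).2 hi

/-- Covariance bound when `k - i` has its largest coordinate on the positive side. After the
shift by `-i - (M,…,M)` the first functional lives on sites with coordinates `≤ 0`, the second on
sites whose `l`-th coordinate is at least `siteNorm (k - i) - 2M`. -/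
lemma cov_local_aux [MeasurableSpace Ω] {P : Measure Ω} [IsProbabilityMeasure P]
    {ξ : (Fin q → ℤ) → Ω → E}
    (hmeas : ∀ i, Measurable (ξ i)) (hstat : StrictStationary ξ P) {M : ℕ}
    {F G : ((Fin q → ℤ) → E) → ℝ} (hF : Measurable F) (hG : Measurable G)
    (hFl : LocalFn Ω M F) (hGl : LocalFn Ω M G)
    (hF2 : Integrable (fun ω => F (fun u => ξ u ω) ^ 2) P)
    (hG2 : Integrable (fun ω => G (fun u => ξ u ω) ^ 2) P)
    (i k : Fin q → ℤ) (l : Fin q) (hl : (k - i) l = siteNorm (k - i)) :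
    (∫ ω, F (fun u => ξ (u + i) ω) * G (fun u => ξ (u + k) ω) ∂P
        - (∫ ω, F (fun u => ξ u ω) ∂P) * ∫ ω, G (fun u => ξ u ω) ∂P) ^ 2
      ≤ 4 * phiMix ξ P ((siteNorm (k - i) : ℤ) - 2 * M) * (∫ ω, F (fun u => ξ u ω) ^ 2 ∂P)
        * ∫ ω, G (fun u => ξ u ω) ^ 2 ∂P := by
  set t : Fin q → ℤ := -i - fun _ => (M : ℤ) with ht
  have hsh : ∀ a : Fin q → ℤ, Measurable fun (x : (Fin q → ℤ) → E) => fun u => x (u + a) :=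
    fun a => measurable_pi_lambda _ fun u => measurable_pi_apply _
  have hprod : ∫ ω, F (fun u => ξ (u + i) ω) * G (fun u => ξ (u + k) ω) ∂P
      = ∫ ω, F (fun u => ξ (u + i + t) ω) * G (fun u => ξ (u + k + t) ω) ∂P :=
    (integral_shift hmeas hstat
      (F := fun x => F (fun u => x (u + i)) * G (fun u => x (u + k)))
      ((hF.comp (hsh i)).mul (hG.comp (hsh k))) t).symm
  have e : ∀ a u : Fin q → ℤ, u + a + t = u + (a + t) := fun a u => add_assoc _ _ _
  simp only [e] at hprod
  have hX : Measurable[sigmaLE ξ l 0] fun ω => F (fun u => ξ (u + (i + t)) ω) := by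
    refine hFl _ (fun ω u => ξ (u + (i + t)) ω) fun u hu => measurable_sigmaLE ξ ?_
    have := (natAbs_le_siteNorm u l).trans hu
    simp only [ht, Pi.add_apply, Pi.sub_apply, Pi.neg_apply]
    omega
  have hY : Measurable[sigmaGE ξ l ((siteNorm (k - i) : ℤ) - 2 * M)]
      fun ω => G (fun u => ξ (u + (k + t)) ω) := by
    refine hGl _ (fun ω u => ξ (u + (k + t)) ω) fun u hu => measurable_sigmaGE ξ ?_
    have := (natAbs_le_siteNorm u l).trans hu
    rw [← hl]
    simp only [ht, Pi.add_apply, Pi.sub_apply, Pi.neg_apply]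
    omega
  have hsq : ∀ (H : ((Fin q → ℤ) → E) → ℝ), Measurable H →
      Integrable (fun ω => H (fun u => ξ u ω) ^ 2) P → ∀ a : Fin q → ℤ,
      MemLp (fun ω => H (fun u => ξ (u + a) ω)) 2 P := by
    intro H hH hH2 a
    have h1 : Measurable fun ω => fun u => ξ (u + a) ω := measurable_pi_lambda _ fun u => hmeas _
    exact (memLp_two_iff_integrable_sq (hH.comp h1).aestronglyMeasurable).2
      (integrable_shift hmeas hstat (F := fun x => H x ^ 2) (hH.pow_const 2) a hH2)
  have := cov_sq_le P _ (sigmaLE_le hmeas l 0) (sigmaGE_le hmeas l _)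
    (phiMix_spec ξ P l ((siteNorm (k - i) : ℤ) - 2 * M)) hX hY
    (hsq F hF hF2 _) (hsq G hG hG2 _)
  rwa [← hprod, integral_shift hmeas hstat hF, integral_shift hmeas hstat hG,
    integral_shift hmeas hstat (F := fun x => F x ^ 2) (hF.pow_const 2),
    integral_shift hmeas hstat (F := fun x => G x ^ 2) (hG.pow_const 2)] at this

/-- Covariances of shifted local functionals are controlled by the mixing coefficient at the
distance of the shifts, reduced by twice the range `M`. -/
lemma cov_local [Nonempty (Fin q)] [MeasurableSpace Ω] {P : Measure Ω} [IsProbabilityMeasure P]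
    {ξ : (Fin q → ℤ) → Ω → E}
    (hmeas : ∀ i, Measurable (ξ i)) (hstat : StrictStationary ξ P) {M : ℕ}
    {F G : ((Fin q → ℤ) → E) → ℝ} (hF : Measurable F) (hG : Measurable G)
    (hFl : LocalFn Ω M F) (hGl : LocalFn Ω M G) {K : ℝ}
    (hF2 : Integrable (fun ω => F (fun u => ξ u ω) ^ 2) P)
    (hG2 : Integrable (fun ω => G (fun u => ξ u ω) ^ 2) P)
    (hFK : ∫ ω, F (fun u => ξ u ω) ^ 2 ∂P ≤ K) (hGK : ∫ ω, G (fun u => ξ u ω) ^ 2 ∂P ≤ K)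
    (i k : Fin q → ℤ) :
    |∫ ω, F (fun u => ξ (u + i) ω) * G (fun u => ξ (u + k) ω) ∂P
        - (∫ ω, F (fun u => ξ u ω) ∂P) * ∫ ω, G (fun u => ξ u ω) ∂P|
      ≤ 2 * K * √(phiMix ξ P ((siteNorm (k - i) : ℤ) - 2 * M)) := by
  have hF0 : 0 ≤ ∫ ω, F (fun u => ξ u ω) ^ 2 ∂P := integral_nonneg fun _ => sq_nonneg _
  have hG0 : 0 ≤ ∫ ω, G (fun u => ξ u ω) ^ 2 ∂P := integral_nonneg fun _ => sq_nonneg _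
  have hK : 0 ≤ K := hF0.trans hFK
  have hφ := phiMix_nonneg ξ P ((siteNorm (k - i) : ℤ) - 2 * M)
  refine abs_le_of_sq_le_sq ?_ (by positivity)
  have hsym : siteNorm (i - k) = siteNorm (k - i) := by
    simp only [siteNorm, Pi.sub_apply]
    congr 1
    funext l
    omega
  have main : (∫ ω, F (fun u => ξ (u + i) ω) * G (fun u => ξ (u + k) ω) ∂P
        - (∫ ω, F (fun u => ξ u ω) ∂P) * ∫ ω, G (fun u => ξ u ω) ∂P) ^ 2
      ≤ 4 * phiMix ξ P ((siteNorm (k - i) : ℤ) - 2 * M) *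
        ((∫ ω, F (fun u => ξ u ω) ^ 2 ∂P) * ∫ ω, G (fun u => ξ u ω) ^ 2 ∂P) := by
    obtain ⟨l, hl⟩ := exists_natAbs_eq_siteNorm (k - i)
    rcases Int.natAbs_eq ((k - i) l) with h | h
    · have := cov_local_aux hmeas hstat hF hG hFl hGl hF2 hG2 i k l (by rw [h, hl])
      rwa [mul_assoc] at this
    · have h' : (i - k) l = siteNorm (i - k) := by
        rw [hsym, ← hl, ← neg_sub k i, Pi.neg_apply, h]; simp
      have := cov_local_aux hmeas hstat hG hF hGl hFl hG2 hF2 k i l h'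
      rw [hsym, mul_assoc] at this
      simp only [mul_comm] at this ⊢
      exact this
  refine main.trans ?_
  rw [mul_pow, Real.sq_sqrt hφ]
  have := mul_le_mul hFK hGK hG0 hK
  nlinarith [mul_le_mul_of_nonneg_left this hφ]

lemma integral_centered_mul [MeasurableSpace Ω] {P : Measure Ω} [IsProbabilityMeasure P]
    {X Y : Ω → ℝ} (hX : MemLp X 2 P) (hY : MemLp Y 2 P) (g : ℝ) :
    ∫ ω, (X ω - g) * (Y ω - g) ∂P
      = ∫ ω, X ω * Y ω ∂P - g * ∫ ω, X ω ∂P - g * ∫ ω, Y ω ∂P + g * g := by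
  have h1 : Integrable (fun ω => g * X ω) P := (hX.integrable one_le_two).const_mul g
  have h2 : Integrable (fun ω => g * Y ω) P := (hY.integrable one_le_two).const_mul g
  have h3 : Integrable (fun ω => X ω * Y ω) P := hX.integrable_mul hY
  have h4 : Integrable (fun ω => X ω * Y ω - g * X ω) P := h3.sub h1
  have h5 : Integrable (fun ω => X ω * Y ω - g * X ω - g * Y ω) P := h4.sub h2
  have e : (fun ω => (X ω - g) * (Y ω - g))
      = fun ω => X ω * Y ω - g * X ω - g * Y ω + g * g := by
    funext ω; ring
  rw [e, integral_add h5 (integrable_const _), integral_sub h4 h2, integral_sub h3 h1,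
    integral_const_mul, integral_const_mul]
  simp

/-- Averages of a stationary local functional over `B` have variance `O(D / |B|)`, where `D` bounds
the lattice sums of `√φ`. -/
lemma var_avg [Nonempty (Fin q)] [MeasurableSpace Ω] {P : Measure Ω} [IsProbabilityMeasure P]
    {ξ : (Fin q → ℤ) → Ω → E}
    (hmeas : ∀ i, Measurable (ξ i)) (hstat : StrictStationary ξ P) {M : ℕ}
    {F : ((Fin q → ℤ) → E) → ℝ} (hF : Measurable F) (hFl : LocalFn Ω M F) {K D : ℝ}
    (hF2 : Integrable (fun ω => F (fun u => ξ u ω) ^ 2) P)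
    (hFK : ∫ ω, F (fun u => ξ u ω) ^ 2 ∂P ≤ K)
    (hD : ∀ A : Finset (Fin q → ℤ),
      ∑ d ∈ A, √(phiMix ξ P ((siteNorm d : ℤ) - 2 * M)) ≤ D)
    (B : Finset (Fin q → ℤ)) (hB : B.Nonempty) :
    MemLp (fun ω => (B.card : ℝ)⁻¹ * ∑ i ∈ B, F (fun u => ξ (u + i) ω)
        - ∫ ω, F (fun u => ξ u ω) ∂P) 2 P ∧
    ∫ ω, ((B.card : ℝ)⁻¹ * ∑ i ∈ B, F (fun u => ξ (u + i) ω)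
        - ∫ ω, F (fun u => ξ u ω) ∂P) ^ 2 ∂P ≤ 2 * K * D / B.card := by
  classical
  set g := ∫ ω, F (fun u => ξ u ω) ∂P with hg
  have hc : (0 : ℝ) < B.card := by exact_mod_cast hB.card_pos
  have hK : 0 ≤ K := (integral_nonneg fun _ => sq_nonneg _).trans hFK
  have hZ : ∀ i, MemLp (fun ω => F (fun u => ξ (u + i) ω)) 2 P := by
    intro i
    have h1 : Measurable fun ω => fun u => ξ (u + i) ω := measurable_pi_lambda _ fun u => hmeas _
    exact (memLp_two_iff_integrable_sq (hF.comp h1).aestronglyMeasurable).2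
      (integrable_shift hmeas hstat (F := fun x => F x ^ 2) (hF.pow_const 2) i hF2)
  have hZc : ∀ i, MemLp (fun ω => F (fun u => ξ (u + i) ω) - g) 2 P :=
    fun i => (hZ i).sub (memLp_const g)
  have hcov : ∀ i k, ∫ ω, (F (fun u => ξ (u + i) ω) - g) * (F (fun u => ξ (u + k) ω) - g) ∂P
      ≤ 2 * K * √(phiMix ξ P ((siteNorm (k - i) : ℤ) - 2 * M)) := by
    intro i k
    rw [integral_centered_mul (hZ i) (hZ k), integral_shift hmeas hstat hF,
      integral_shift hmeas hstat hF, ← hg]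
    have := (abs_le.1 (cov_local hmeas hstat hF hF hFl hFl hF2 hF2 hFK hFK i k)).2
    rw [← hg] at this
    linarith
  have e : ∀ ω, (B.card : ℝ)⁻¹ * ∑ i ∈ B, F (fun u => ξ (u + i) ω) - g
      = (B.card : ℝ)⁻¹ * ∑ i ∈ B, (F (fun u => ξ (u + i) ω) - g) := by
    intro ω
    rw [Finset.sum_sub_distrib, Finset.sum_const, nsmul_eq_mul, mul_sub,
      inv_mul_cancel_left₀ hc.ne']
  simp only [e]
  refine ⟨(memLp_finsetSum B fun i _ => hZc i).const_mul _, ?_⟩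
  have hint : ∀ i k, Integrable
      (fun ω => (F (fun u => ξ (u + i) ω) - g) * (F (fun u => ξ (u + k) ω) - g)) P :=
    fun i k => (hZc i).integrable_mul (hZc k)
  simp only [mul_pow]
  rw [integral_const_mul]
  simp only [sq (∑ i ∈ B, _), Finset.sum_mul_sum]
  rw [integral_finsetSum _ fun i _ => integrable_finsetSum _ fun k _ => hint i k]
  have hrow : ∀ i ∈ B, ∫ ω, ∑ k ∈ B,
      (F (fun u => ξ (u + i) ω) - g) * (F (fun u => ξ (u + k) ω) - g) ∂P ≤ 2 * K * D := by
    intro i _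
    rw [integral_finsetSum _ fun k _ => hint i k]
    refine (Finset.sum_le_sum fun k _ => hcov i k).trans ?_
    rw [← Finset.mul_sum]
    refine mul_le_mul_of_nonneg_left ?_ (by positivity)
    refine le_trans (le_of_eq ?_) (hD (B.image fun k => k - i))
    rw [Finset.sum_image fun a _ b _ hab => sub_left_injective hab]
  calc _ ≤ ((B.card : ℝ)⁻¹) ^ 2 * ∑ i ∈ B, 2 * K * D :=
        mul_le_mul_of_nonneg_left (Finset.sum_le_sum hrow) (by positivity)
    _ = _ := by
        rw [Finset.sum_const, nsmul_eq_mul]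
        field_simp

end Field

/-! ### Mean square error and bias of the estimator -/

lemma le_card_boxJ {q : ℕ} (n : Fin q → ℕ) (j : Fin q → ℤ) (M N : ℕ)
    (hj : siteNorm j ≤ M) (hN : ∀ k, N ≤ n k) (hMN : 2 * M ≤ N) :
    ((N : ℝ) / 2) ^ q ≤ (boxJ q n j).card := by
  classical
  have hsub : (Fintype.piFinset fun k : Fin q =>
      Finset.Icc (1 + max 0 (-j k)) ((n k : ℤ) - max 0 (j k))) ⊆ boxJ q n j := by
    intro i hi
    rw [Fintype.mem_piFinset] at hi
    simp only [boxJ, _root_.box, Finset.mem_filter, Finset.mem_Icc, Pi.le_def, Pi.add_apply,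
      Pi.one_apply, ← forall_and]
    intro k
    have := Finset.mem_Icc.1 (hi k)
    omega
  have hcard : (N - M) ^ q ≤ (boxJ q n j).card := by
    refine le_trans ?_ (Finset.card_le_card hsub)
    rw [Fintype.card_piFinset]
    calc (N - M) ^ q = ∏ _k : Fin q, (N - M) := by simp
      _ ≤ _ := by
        refine Finset.prod_le_prod' fun k _ => ?_
        have h1 := (natAbs_le_siteNorm j k).trans hj
        have h2 := hN k
        rw [Int.card_Icc]
        omega
  calc ((N : ℝ) / 2) ^ q ≤ (((N - M : ℕ) : ℝ)) ^ q := by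
        refine pow_le_pow_left₀ (by positivity) ?_ q
        rw [Nat.cast_sub (by omega)]
        have : (2 * M : ℝ) ≤ N := by exact_mod_cast hMN
        linarith
    _ ≤ _ := by exact_mod_cast hcard

lemma siteNorm_le_of_mem_lags {q : ℕ} {m : Fin q → ℕ} {M : ℕ} (hm : ∀ k, m k ≤ M)
    {j : Fin q → ℤ} (hj : j ∈ lags q m) : siteNorm j ≤ M := by
  refine siteNorm_le fun k => ?_
  simp only [lags, Finset.mem_Icc, Pi.le_def] at hj
  have h1 := hj.1 k
  have h2 := hj.2 k
  have h3 := hm k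
  omega

lemma mem_lags_of_siteNorm_le {q : ℕ} {m : Fin q → ℕ} {j : Fin q → ℤ}
    (h : ∀ k, siteNorm j ≤ m k) : j ∈ lags q m := by
  simp only [lags, Finset.mem_Icc, Pi.le_def, ← forall_and]
  intro k
  have h1 := h k
  have h2 := natAbs_le_siteNorm j k
  omega

lemma norm_sq_le_sum_sq {p : ℕ} (f : Fin p → Fin p → ℝ) :
    ‖f‖ ^ 2 ≤ ∑ ν, ∑ μ, f ν μ ^ 2 := by
  have h0 : ∀ ν, 0 ≤ ∑ μ, f ν μ ^ 2 := fun ν => Finset.sum_nonneg fun _ _ => sq_nonneg _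
  have h : ‖f‖ ≤ √(∑ ν, ∑ μ, f ν μ ^ 2) := by
    refine (pi_norm_le_iff_of_nonneg (Real.sqrt_nonneg _)).2 fun ν =>
      (pi_norm_le_iff_of_nonneg (Real.sqrt_nonneg _)).2 fun μ => ?_
    rw [Real.norm_eq_abs]
    refine Real.abs_le_sqrt ?_
    exact (Finset.single_le_sum (f := fun μ => f ν μ ^ 2) (fun _ _ => sq_nonneg _)
      (Finset.mem_univ μ)).trans
      (Finset.single_le_sum (f := fun ν => ∑ μ, f ν μ ^ 2) (fun ν _ => h0 ν) (Finset.mem_univ ν))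
  calc ‖f‖ ^ 2 ≤ √(∑ ν, ∑ μ, f ν μ ^ 2) ^ 2 := pow_le_pow_left₀ (norm_nonneg _) h 2
    _ = _ := Real.sq_sqrt (Finset.sum_nonneg fun ν _ => h0 ν)

section Consistency

variable {q p : ℕ} [MeasurableSpace Ω] {P : Measure Ω} {ξ : (Fin q → ℤ) → Ω → (Fin p → ℝ)}

/-- The autocovariances are `O(√φ(|j|))`, by the covariance inequality and centering. -/
lemma norm_acov_le [Nonempty (Fin q)] [IsProbabilityMeasure P]
    (hmeas : ∀ i, Measurable (ξ i)) (hstat : StrictStationary ξ P)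
    (hmean : ∀ k, ∫ ω, ξ 0 ω k ∂P = 0) {K : ℝ}
    (h2 : ∀ k, Integrable (fun ω => (ξ 0 ω k) ^ 2) P)
    (h2K : ∀ k, ∫ ω, (ξ 0 ω k) ^ 2 ∂P ≤ K) (hK : 0 ≤ K) (j : Fin q → ℤ) :
    ‖acov ξ P j‖ ≤ 2 * K * √(phiMix ξ P (siteNorm j : ℤ)) := by
  refine (pi_norm_le_iff_of_nonneg (by positivity)).2 fun ν =>
      (pi_norm_le_iff_of_nonneg (by positivity)).2 fun μ => ?_
  have hm : ∀ k : Fin p, Measurable fun x : (Fin q → ℤ) → Fin p → ℝ => x 0 k :=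
    fun k => (measurable_pi_apply k).comp (measurable_pi_apply 0)
  have hl : ∀ k : Fin p, LocalFn Ω 0 fun x : (Fin q → ℤ) → Fin p → ℝ => x 0 k := by
    intro k m x hx
    exact (measurable_pi_apply k).comp (hx 0 (siteNorm_le fun k => by simp))
  have := cov_local hmeas hstat (hm ν) (hm μ) (hl ν) (hl μ) (h2 ν) (h2 μ) (h2K ν) (h2K μ) 0 j
  simpa [hmean, acov] using this

lemma memLp_prod_aux (hmeas : ∀ i, Measurable (ξ i)) (hstat : StrictStationary ξ P)
    (hmom : ∀ k, Integrable (fun ω => (ξ 0 ω k) ^ 4) P) {K : ℝ}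
    (hK : ∀ k, ∫ ω, (ξ 0 ω k) ^ 4 ∂P ≤ K) (j : Fin q → ℤ) (ν μ : Fin p) :
    Integrable (fun ω => (ξ 0 ω ν * ξ j ω μ) ^ 2) P ∧
      ∫ ω, (ξ 0 ω ν * ξ j ω μ) ^ 2 ∂P ≤ K := by
  have hm : ∀ k : Fin p, Measurable fun x : (Fin q → ℤ) → Fin p → ℝ => x 0 k ^ 4 :=
    fun k => ((measurable_pi_apply k).comp (measurable_pi_apply 0)).pow_const 4
  have hi : Integrable (fun ω => ξ j ω μ ^ 4) P := by
    have := integrable_shift hmeas hstat (hm μ) j (hmom μ)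
    simpa using this
  have hi' : ∫ ω, ξ j ω μ ^ 4 ∂P ≤ K := by
    have := integral_shift hmeas hstat (hm μ) j
    simp only [zero_add] at this
    rw [this]
    exact hK μ
  have hb : ∀ a b : ℝ, (a * b) ^ 2 ≤ (a ^ 4 + b ^ 4) / 2 := fun a b => by
    nlinarith [sq_nonneg (a ^ 2 - b ^ 2)]
  have hdom : Integrable (fun ω => (ξ 0 ω ν ^ 4 + ξ j ω μ ^ 4) / 2) P :=
    ((hmom ν).add hi).div_const 2
  have hint : Integrable (fun ω => (ξ 0 ω ν * ξ j ω μ) ^ 2) P := by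
    refine hdom.mono' ?_ (Eventually.of_forall fun ω => ?_)
    · exact ((((measurable_pi_apply ν).comp (hmeas 0)).mul
        ((measurable_pi_apply μ).comp (hmeas j))).pow_const 2).aestronglyMeasurable
    · rw [Real.norm_eq_abs, abs_of_nonneg (sq_nonneg _)]
      exact hb _ _
  refine ⟨hint, (integral_mono hint hdom fun ω => hb _ _).trans ?_⟩
  rw [integral_div, integral_add (hmom ν) hi]
  linarith [hK ν]

/-- Mean square error of a sample autocovariance: the products `ξ_i ξ_{i+j}ᵀ` form a stationary
field of local functionals with range `|j| ≤ M`. -/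
lemma mse_acovHat [Nonempty (Fin q)] [IsProbabilityMeasure P]
    (hmeas : ∀ i, Measurable (ξ i)) (hstat : StrictStationary ξ P)
    (hmom : ∀ k, Integrable (fun ω => (ξ 0 ω k) ^ 4) P) {K D : ℝ} {M : ℕ}
    (hK : ∀ k, ∫ ω, (ξ 0 ω k) ^ 4 ∂P ≤ K)
    (hD : ∀ A : Finset (Fin q → ℤ),
      ∑ d ∈ A, √(phiMix ξ P ((siteNorm d : ℤ) - 2 * M)) ≤ D)
    (n : Fin q → ℕ) (j : Fin q → ℤ) (hj : siteNorm j ≤ M) (hB : (boxJ q n j).Nonempty)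
    (ν μ : Fin p) :
    MemLp (fun ω => acovHat ξ n j ω ν μ - acov ξ P j ν μ) 2 P ∧
    ∫ ω, (acovHat ξ n j ω ν μ - acov ξ P j ν μ) ^ 2 ∂P ≤ 2 * K * D / (boxJ q n j).card := by
  have hF : Measurable fun x : (Fin q → ℤ) → Fin p → ℝ => x 0 ν * x j μ :=
    Measurable.mul (f := fun x : (Fin q → ℤ) → Fin p → ℝ => x 0 ν) (g := fun x => x j μ)
      ((measurable_pi_apply ν).comp (measurable_pi_apply 0))
      ((measurable_pi_apply μ).comp (measurable_pi_apply j))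
  have hFl : LocalFn Ω M fun x : (Fin q → ℤ) → Fin p → ℝ => x 0 ν * x j μ := by
    intro m x hx
    exact Measurable.mul (f := fun ω => x ω 0 ν) (g := fun ω => x ω j μ)
      ((measurable_pi_apply ν).comp (hx 0 (siteNorm_le fun k => by simp)))
      ((measurable_pi_apply μ).comp (hx j hj))
  obtain ⟨h1, h2⟩ := memLp_prod_aux hmeas hstat hmom hK j ν μ
  have := var_avg hmeas hstat hF hFl h1 h2 hD (boxJ q n j) hB
  simpa only [acovHat, acov, zero_add, add_comm j] using this

/-- The expectation of the estimator converges to the asymptotic variance, by dominated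
convergence for series. -/
lemma tendsto_bias {C : ℝ} (w : (Fin q → ℕ) → (Fin q → ℤ) → ℝ)
    (hW1 : ∀ j : Fin q → ℤ, Tendsto (fun m : Fin q → ℕ => w m j) atTop (𝓝 1))
    (hW2 : ∀ m j, |w m j| ≤ C) (mseq : (Fin q → ℕ) → (Fin q → ℕ))
    (hm1 : Tendsto mseq atTop atTop) (hs : Summable fun j => ‖acov ξ P j‖) :
    Tendsto (fun n => ∑ j ∈ lags q (mseq n), w (mseq n) j • acov ξ P j) atTop
      (𝓝 (∑' j : Fin q → ℤ, acov ξ P j)) := by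
  classical
  have hC : 0 ≤ C := (abs_nonneg _).trans (hW2 0 0)
  have e : ∀ n, ∑ j ∈ lags q (mseq n), w (mseq n) j • acov ξ P j
      = ∑' j, if j ∈ lags q (mseq n) then w (mseq n) j • acov ξ P j else 0 := by
    intro n
    rw [tsum_eq_sum (s := lags q (mseq n)) fun j hj => if_neg hj]
    exact Finset.sum_congr rfl fun j hj => (if_pos hj).symm
  simp only [e]
  refine tendsto_tsum_of_dominated_convergence (hs.mul_left C) (fun j => ?_)
    (Eventually.of_forall fun n j => ?_)
  · have h1 : Tendsto (fun n => w (mseq n) j • acov ξ P j) atTop (𝓝 (acov ξ P j)) := by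
      have := ((hW1 j).comp hm1).smul_const (acov ξ P j)
      simpa using this
    refine h1.congr' ?_
    filter_upwards [hm1.eventually_ge_atTop fun _ => siteNorm j] with n hn
    rw [if_pos (mem_lags_of_siteNorm_le fun k => hn k)]
  · split_ifs
    · rw [norm_smul, Real.norm_eq_abs]
      exact mul_le_mul_of_nonneg_right (hW2 _ _) (norm_nonneg _)
    · rw [norm_zero]; positivity

/-- Mean square bound for one entry of the centred estimator, by Cauchy–Schwarz over the lags. -/
lemma mse_entry {ι : Type*} (L : Finset ι) (a : ι → ℝ) (Z : ι → Ω → ℝ) {C V : ℝ}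
    (ha : ∀ j, |a j| ≤ C) (hZ : ∀ j ∈ L, MemLp (Z j) 2 P)
    (hV : ∀ j ∈ L, ∫ ω, Z j ω ^ 2 ∂P ≤ V) :
    Integrable (fun ω => (∑ j ∈ L, a j * Z j ω) ^ 2) P ∧
      ∫ ω, (∑ j ∈ L, a j * Z j ω) ^ 2 ∂P ≤ (L.card : ℝ) ^ 2 * C ^ 2 * V := by
  have h1 : MemLp (fun ω => ∑ j ∈ L, a j * Z j ω) 2 P :=
    memLp_finsetSum L fun j hj => (hZ j hj).const_mul _
  have h2 : ∀ j ∈ L, Integrable (fun ω => (a j * Z j ω) ^ 2) P :=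
    fun j hj => ((hZ j hj).const_mul _).integrable_sq
  refine ⟨h1.integrable_sq, ?_⟩
  calc ∫ ω, (∑ j ∈ L, a j * Z j ω) ^ 2 ∂P
      ≤ ∫ ω, (L.card : ℝ) * ∑ j ∈ L, (a j * Z j ω) ^ 2 ∂P :=
        integral_mono h1.integrable_sq ((integrable_finsetSum _ h2).const_mul _)
          fun ω => sq_sum_le_card_mul_sum_sq
    _ = (L.card : ℝ) * ∑ j ∈ L, a j ^ 2 * ∫ ω, Z j ω ^ 2 ∂P := by
        rw [integral_const_mul, integral_finsetSum _ h2]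
        simp only [mul_pow, integral_const_mul]
    _ ≤ (L.card : ℝ) * ∑ j ∈ L, C ^ 2 * V := by
        refine mul_le_mul_of_nonneg_left (Finset.sum_le_sum fun j hj => ?_) (by positivity)
        have : a j ^ 2 ≤ C ^ 2 := sq_le_sq' (abs_le.1 (ha j)).1 (abs_le.1 (ha j)).2
        exact mul_le_mul this (hV j hj) (integral_nonneg fun _ => sq_nonneg _) (sq_nonneg _)
    _ = _ := by rw [Finset.sum_const, nsmul_eq_mul]; ring

/-- Chebyshev's inequality for the matrix-valued estimator, with the bound expressed through the
ratio `M³/N` of the truncation and sample size constants. -/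
lemma prob_dev_le [Nonempty (Fin q)] [IsProbabilityMeasure P]
    (hmeas : ∀ i, Measurable (ξ i)) (hstat : StrictStationary ξ P)
    (hmom : ∀ k, Integrable (fun ω => (ξ 0 ω k) ^ 4) P) {K C D : ℝ} {M N : ℕ}
    (hK0 : 0 ≤ K) (hD0 : 0 ≤ D)
    (hK : ∀ k, ∫ ω, (ξ 0 ω k) ^ 4 ∂P ≤ K)
    (hD : ∀ A : Finset (Fin q → ℤ),
      ∑ d ∈ A, √(phiMix ξ P ((siteNorm d : ℤ) - 2 * M)) ≤ D * ((M : ℝ) + 1) ^ q)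
    (w : (Fin q → ℕ) → (Fin q → ℤ) → ℝ) (hW2 : ∀ m j, |w m j| ≤ C)
    (n m : Fin q → ℕ) (hm : ∀ k, m k ≤ M) (hn : ∀ k, N ≤ n k) (hM : 1 ≤ M) (hMN : 2 * M ≤ N)
    {δ : ℝ} (hδ : 0 < δ) :
    P.real {ω | δ < ‖sigmaHat ξ w m n ω - ∑ j ∈ lags q m, w m j • acov ξ P j‖} ≤
      (δ ^ 2)⁻¹ * ((p : ℝ) ^ 2 * C ^ 2 * (2 * K * D) * 36 ^ q) * ((M : ℝ) ^ 3 / N) ^ q := by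
  set L := lags q m with hL
  set V := 2 * K * (D * ((M : ℝ) + 1) ^ q) / ((N : ℝ) / 2) ^ q with hV
  have hNpos : (0 : ℝ) < N := by exact_mod_cast (by omega : 0 < N)
  have hM1 : (1 : ℝ) ≤ M := by exact_mod_cast hM
  have hLM : ∀ j ∈ L, siteNorm j ≤ M := fun j hj => siteNorm_le_of_mem_lags hm hj
  have hent : ∀ ω ν μ, (sigmaHat ξ w m n ω - ∑ j ∈ L, w m j • acov ξ P j) ν μ
      = ∑ j ∈ L, w m j * (acovHat ξ n j ω ν μ - acov ξ P j ν μ) := by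
    intro ω ν μ
    simp only [sigmaHat, Pi.sub_apply, Finset.sum_apply, Pi.smul_apply, smul_eq_mul, ← hL,
      mul_sub, Finset.sum_sub_distrib]
  have hcard : ∀ j ∈ L, ((N : ℝ) / 2) ^ q ≤ (boxJ q n j).card := fun j hj =>
    le_card_boxJ n j M N (hLM j hj) hn hMN
  have hmse : ∀ j ∈ L, ∀ ν μ, MemLp (fun ω => acovHat ξ n j ω ν μ - acov ξ P j ν μ) 2 P ∧
      ∫ ω, (acovHat ξ n j ω ν μ - acov ξ P j ν μ) ^ 2 ∂P ≤ V := by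
    intro j hj ν μ
    have hpos : (0 : ℝ) < (boxJ q n j).card := lt_of_lt_of_le (by positivity) (hcard j hj)
    have hne : (boxJ q n j).Nonempty := Finset.card_pos.1 (by exact_mod_cast hpos)
    obtain ⟨h1, h2⟩ := mse_acovHat hmeas hstat hmom hK hD n j (hLM j hj) hne ν μ
    exact ⟨h1, h2.trans (div_le_div_of_nonneg_left (by positivity) (by positivity) (hcard j hj))⟩
  have hE := fun ν μ => mse_entry (P := P) L (w m)
    (fun j ω => acovHat ξ n j ω ν μ - acov ξ P j ν μ) (hW2 m)
    (fun j hj => (hmse j hj ν μ).1) (fun j hj => (hmse j hj ν μ).2)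
  set Q : Ω → ℝ := fun ω => ∑ ν : Fin p, ∑ μ : Fin p,
    (∑ j ∈ L, w m j * (acovHat ξ n j ω ν μ - acov ξ P j ν μ)) ^ 2 with hQ
  have hQi : Integrable Q P :=
    integrable_finsetSum _ fun ν _ => integrable_finsetSum _ fun μ _ => (hE ν μ).1
  have hQb : ∫ ω, Q ω ∂P ≤ (p : ℝ) ^ 2 * ((L.card : ℝ) ^ 2 * C ^ 2 * V) := by
    simp only [hQ]
    rw [integral_finsetSum _ fun ν _ => integrable_finsetSum _ fun μ _ => (hE ν μ).1]
    calc _ ≤ ∑ _ν : Fin p, ∑ _μ : Fin p, ((L.card : ℝ) ^ 2 * C ^ 2 * V) := by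
          refine Finset.sum_le_sum fun ν _ => ?_
          rw [integral_finsetSum _ fun μ _ => (hE ν μ).1]
          exact Finset.sum_le_sum fun μ _ => (hE ν μ).2
      _ = _ := by simp; ring
  have hsub : {ω | δ < ‖sigmaHat ξ w m n ω - ∑ j ∈ L, w m j • acov ξ P j‖}
      ⊆ {ω | δ ^ 2 ≤ Q ω} := by
    intro ω hω
    have h1 := norm_sq_le_sum_sq (sigmaHat ξ w m n ω - ∑ j ∈ L, w m j • acov ξ P j)
    simp only [hent] at h1
    exact (pow_le_pow_left₀ hδ.le (le_of_lt hω) 2).trans h1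
  have hcheb := mul_meas_ge_le_integral_of_nonneg (μ := P) (f := Q)
    (Eventually.of_forall fun ω => Finset.sum_nonneg fun _ _ => Finset.sum_nonneg fun _ _ =>
      sq_nonneg _) hQi (δ ^ 2)
  have hLc : (L.card : ℝ) ≤ (3 * (M : ℝ)) ^ q := by
    have h1 : (L.card : ℝ) ≤ (((2 * M + 1) ^ q : ℕ) : ℝ) := by
      exact_mod_cast card_le_ball L M hLM
    refine h1.trans ?_
    push_cast
    exact pow_le_pow_left₀ (by positivity) (by linarith) q
  have hVb : V ≤ 2 * K * D * 4 ^ q * (M : ℝ) ^ q / (N : ℝ) ^ q := by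
    have h1 : ((M : ℝ) + 1) ^ q ≤ (2 * M) ^ q :=
      pow_le_pow_left₀ (by positivity) (by linarith) q
    calc V ≤ 2 * K * (D * (2 * M : ℝ) ^ q) / ((N : ℝ) / 2) ^ q := by
          simp only [hV]
          gcongr
      _ = _ := by
          rw [mul_pow, div_pow, (by norm_num : (4 : ℝ) = 2 * 2), mul_pow 2 2]
          field_simp
  have hV0 : 0 ≤ V := by positivity
  calc P.real {ω | δ < ‖sigmaHat ξ w m n ω - ∑ j ∈ L, w m j • acov ξ P j‖}
      ≤ P.real {ω | δ ^ 2 ≤ Q ω} := measureReal_mono hsub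
    _ ≤ (δ ^ 2)⁻¹ * ∫ ω, Q ω ∂P := by
        rw [← div_eq_inv_mul, le_div_iff₀ (by positivity), mul_comm]
        exact hcheb
    _ ≤ (δ ^ 2)⁻¹ * ((p : ℝ) ^ 2 * (((3 * (M : ℝ)) ^ q) ^ 2 * C ^ 2 *
          (2 * K * D * 4 ^ q * (M : ℝ) ^ q / (N : ℝ) ^ q))) := by
        refine mul_le_mul_of_nonneg_left (hQb.trans ?_) (by positivity)
        gcongr
    _ = _ := by
        have e1 : (36 : ℝ) ^ q = (3 ^ q) ^ 2 * 4 ^ q := by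
          rw [← pow_mul, mul_comm q 2, pow_mul, ← mul_pow]; norm_num
        have e2 : ((M : ℝ) ^ 3) ^ q = ((M : ℝ) ^ q) ^ 3 := by rw [← pow_mul, ← pow_mul, mul_comm]
        rw [div_pow, e1, e2, mul_pow]
        ring

end Consistency

/-! ### Consistency -/

/-- Theorem: weak consistency of `σ̂²_n`. -/
theorem sigmaHat_consistent
    {q p : ℕ} [Nonempty (Fin q)] (hp : 0 < p)
    [MeasurableSpace Ω] (P : Measure Ω) [IsProbabilityMeasure P]
    (ξ : (Fin q → ℤ) → Ω → (Fin p → ℝ))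
    (hmeas : ∀ i, Measurable (ξ i))
    (hstat : StrictStationary ξ P)
    (hmix : Tendsto (fun r : ℕ => phiMix ξ P (r : ℤ)) atTop (𝓝 0))
    (hmean : ∀ k, ∫ ω, ξ 0 ω k ∂P = 0)
    (hmom : ∀ k, Integrable (fun ω => (ξ 0 ω k) ^ 4) P)
    (hphisum : Summable (fun r : ℕ => (r : ℝ) ^ (q - 1) * Real.sqrt (phiMix ξ P (r : ℤ))))
    (w : (Fin q → ℕ) → (Fin q → ℤ) → ℝ)
    (hW1 : ∀ j : Fin q → ℤ, Tendsto (fun m : Fin q → ℕ => w m j) atTop (𝓝 1))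
    (hW2 : ∃ C : ℝ, ∀ m j, |w m j| ≤ C)
    (mseq : (Fin q → ℕ) → (Fin q → ℕ))
    (hm1 : Tendsto mseq atTop atTop)
    (hm2 : Tendsto (fun n : Fin q → ℕ =>
      ((⨆ i, mseq n i : ℕ) : ℝ) ^ 3 / ((⨅ i, n i : ℕ) : ℝ)) atTop (𝓝 0)) :
    ∀ ε : ℝ, 0 < ε →
      Tendsto (fun n : Fin q → ℕ =>
        P {ω | ε < ‖sigmaHat ξ w (mseq n) n ω - (∑' j : Fin q → ℤ, acov ξ P j)‖})
        atTop (𝓝 0) := by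
  intro ε hε
  obtain ⟨C, hC⟩ := hW2
  -- One constant dominating all second and fourth moments, since `x ^ 2 ≤ 1 + x ^ 4`.
  set K : ℝ := 1 + ∑ k, ∫ ω, (ξ 0 ω k) ^ 4 ∂P with hKdef
  have h4nn : ∀ k, 0 ≤ ∫ ω, (ξ 0 ω k) ^ 4 ∂P := fun k => integral_nonneg fun _ => by positivity
  have hK0 : 0 ≤ K := add_nonneg zero_le_one (Finset.sum_nonneg fun k _ => h4nn k)
  have h4K' : ∀ k, 1 + ∫ ω, (ξ 0 ω k) ^ 4 ∂P ≤ K := fun k => by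
    have := Finset.single_le_sum (f := fun k => ∫ ω, (ξ 0 ω k) ^ 4 ∂P)
      (fun k _ => h4nn k) (Finset.mem_univ k)
    linarith
  have h4K : ∀ k, ∫ ω, (ξ 0 ω k) ^ 4 ∂P ≤ K := fun k => by linarith [h4K' k]
  have hb : ∀ x : ℝ, x ^ 2 ≤ 1 + x ^ 4 := fun x => by nlinarith [sq_nonneg (x ^ 2 - 1)]
  have h2 : ∀ k, Integrable (fun ω => (ξ 0 ω k) ^ 2) P := by
    intro k
    refine ((integrable_const (1 : ℝ)).add (hmom k)).mono' ?_ (Eventually.of_forall fun ω => ?_)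
    · exact (((measurable_pi_apply k).comp (hmeas 0)).pow_const 2).aestronglyMeasurable
    · rw [Real.norm_eq_abs, abs_of_nonneg (sq_nonneg _)]
      exact hb _
  have h2K : ∀ k, ∫ ω, (ξ 0 ω k) ^ 2 ∂P ≤ K := by
    intro k
    refine (integral_mono (h2 k) ((integrable_const (1 : ℝ)).add (hmom k)) fun ω => hb _).trans ?_
    rw [integral_add' (integrable_const (1 : ℝ)) (hmom k)]
    simpa using h4K' k
  obtain ⟨D, hD0, hD⟩ := lattice_sum_le (q := q) (fun r => √(phiMix ξ P r))
    (fun r => Real.sqrt_nonneg _) (fun r hr => by simp [phiMix, hr]) hphisum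
  have hs : Summable fun j => ‖acov ξ P j‖ := by
    have hs' : Summable fun j : Fin q → ℤ => √(phiMix ξ P (siteNorm j : ℤ)) := by
      refine summable_of_sum_le (c := D) (fun j => Real.sqrt_nonneg _) fun F => ?_
      simpa using hD 0 F
    exact Summable.of_nonneg_of_le (fun j => norm_nonneg _)
      (norm_acov_le hmeas hstat hmean h2 h2K hK0) (hs'.mul_left (2 * K))
  have hbias := tendsto_bias w hW1 hC mseq hm1 hs
  have hq : q ≠ 0 := by
    rintro rfl
    exact IsEmpty.false (Classical.arbitrary (Fin 0))
  set A : ℝ := ((ε / 2) ^ 2)⁻¹ * ((p : ℝ) ^ 2 * C ^ 2 * (2 * K * D) * 36 ^ q) with hA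
  have hlim : Tendsto (fun n : Fin q → ℕ => ENNReal.ofReal
      (A * (((⨆ i, mseq n i : ℕ) : ℝ) ^ 3 / ((⨅ i, n i : ℕ) : ℝ)) ^ q)) atTop (𝓝 0) := by
    have := ENNReal.tendsto_ofReal ((hm2.pow q).const_mul A)
    simpa [zero_pow hq] using this
  refine tendsto_of_tendsto_of_tendsto_of_le_of_le' tendsto_const_nhds hlim
    (Eventually.of_forall fun n => zero_le) ?_
  filter_upwards [hm2.eventually (gt_mem_nhds (by norm_num : (0 : ℝ) < 1 / 2)),
    hm1.eventually_ge_atTop 1, eventually_ge_atTop (1 : Fin q → ℕ),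
    hbias.eventually (Metric.ball_mem_nhds _ (half_pos hε))] with n hn1 hn2 hn3 hn4
  have hm : ∀ k, mseq n k ≤ ⨆ i, mseq n i := fun k =>
    le_ciSup (Set.finite_range (mseq n)).bddAbove k
  have hn : ∀ k, ⨅ i, n i ≤ n k := fun k => ciInf_le (OrderBot.bddBelow _) k
  have hM : 1 ≤ ⨆ i, mseq n i := (hn2 (Classical.arbitrary _)).trans (hm (Classical.arbitrary _))
  have hN : 1 ≤ ⨅ i, n i := le_ciInf fun i => hn3 i
  generalize (⨆ i, mseq n i) = M at *
  generalize (⨅ i, n i) = N at *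
  -- `N ≥ 1` makes the quotient genuine, and `M ≤ M ^ 3` then shows that every
  -- `Γ̃_n(j)` in the lag window is nonempty.
  have hMN : 2 * M ≤ N := by
    rw [div_lt_iff₀ (by exact_mod_cast hN)] at hn1
    have h1 : 2 * M ^ 3 ≤ N := by
      have : (2 * (M : ℝ) ^ 3) ≤ N := by linarith
      exact_mod_cast this
    have h3 : M ≤ M ^ 3 := Nat.le_self_pow (by norm_num) M
    omega
  have key := prob_dev_le hmeas hstat hmom hK0 hD0 h4K (hD M) w hC n (mseq n) hm hn hM hMN
    (half_pos hε)
  refine le_trans (measure_mono ?_) ((ENNReal.le_ofReal_iff_toReal_le (measure_ne_top _ _)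
    (measureReal_nonneg.trans key)).2 key)
  intro ω hω
  rw [dist_eq_norm] at hn4
  simp only [Set.mem_ofPred_eq] at hω ⊢
  have := norm_add_le
    (sigmaHat ξ w (mseq n) n ω - ∑ j ∈ lags q (mseq n), w (mseq n) j • acov ξ P j)
    (∑ j ∈ lags q (mseq n), w (mseq n) j • acov ξ P j - ∑' j, acov ξ P j)
  rw [sub_add_sub_cancel] at this
  linarith

end
end

section
/- Under Assumption 1, for every fixed lag j ∈ ℤ^q the sample autocovariance γ̂_n(j) is consistent for γ(j): if p = 1 then E[(γ̂_n(j) − γ(j))²] → 0 as n → ∞, and if p > 1 then E‖γ̂_n(j) − γ(j)‖_∞ → 0 as n → ∞; in particular γ̂_n(j) → γ(j) in probability as n → ∞. -/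
/-!
Each entry of the sample autocovariance is an average of the lagged products
`Y_i = ξ_i^{(ν)} ξ_{i+j}^{(μ)}` over a set of sites whose cardinality tends to infinity. By strict
stationarity the `Y_i` share one law, which is square integrable because fourth moments exist, and
whose mean is the entry of `γ(j)`. The proof is a mean-square law of large numbers for `Y_i`.

Mixing enters through `φ(r) → 0`. A shift places the window of `Y_a` in
`{n_k ≤ 0}` and that of `Y_b` in `{n_k ≥ r}` as soon as `b_k - a_k ≥ r + 2|j_k|`, so that events
`{Y_a ∈ B}` and `{Y_b ∈ B'}` are decorrelated up to `φ(r)` (`abs_lagProd_event_le`); each `a` has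
boundedly many `b` for which no direction `k` separates the two sites, in either order, this far.

To pass from events to `Y_i` itself, approximate the identity in `L²` of the common law by a simple
function `s`, and split `Y_i = s(Y_i) + (Y_i - s(Y_i))`. The covariance of `s(Y_a)` and `s(Y_b)` is
a finite combination of covariances of indicators (`abs_cov_simpleFunc_le`), so the variance of the
average of the `s(Y_i)` over `N` sites is `O(1/N) + O(φ(r))`; the average of the centred remainders
has second moment at most `‖Y_0 - s(Y_0)‖₂²`. This is `exists_card_integral_sq_average_le`.
Convergence of the norm in `L¹` follows by summing over entries, and convergence in probability by
Markov's inequality.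
-/

open MeasureTheory Filter Finset Topology

noncomputable section

variable {Ω : Type*}

/-! ### Decorrelation of lagged products -/

/-- The quotient by `P(A)` in the definition of `φ` is cleared using `P(A) ≤ 1`; the content of the
proof is that the supremum is over a bounded set, so that it is not a junk value. -/
lemma abs_measureReal_inter_sub_mul_le_phiMix [MeasurableSpace Ω] {d : ℕ} {E : Type*}
    [MeasurableSpace E] (ξ : (Fin d → ℤ) → Ω → E) (P : Measure Ω) [IsProbabilityMeasure P]
    (k : Fin d) {r : ℤ} (hr : 0 < r) {A B : Set Ω}
    (hA : MeasurableSet[sigmaLE ξ k 0] A) (hB : MeasurableSet[sigmaGE ξ k r] B) :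
    |P.real (A ∩ B) - P.real A * P.real B| ≤ phiMix ξ P r := by
  have hphi : phiCoeff ξ P k r ≤ phiMix ξ P r := by
    rw [phiMix, if_neg (not_le.mpr hr)]
    exact le_ciSup (f := fun j => phiCoeff ξ P j r) (Set.finite_range _).bddAbove k
  have hone : ∀ A B : Set Ω,
      |(P (A ∩ B)).toReal / (P A).toReal - (P B).toReal| ≤ 1 := by
    intro A B
    have h1 : P.real (A ∩ B) / P.real A ≤ 1 :=
      div_le_one_of_le₀ (measureReal_mono Set.inter_subset_left) measureReal_nonneg
    have h2 : 0 ≤ P.real (A ∩ B) / P.real A := by positivity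
    have h3 : P.real B ≤ 1 := measureReal_le_one
    have h4 : 0 ≤ P.real B := measureReal_nonneg
    change |P.real (A ∩ B) / P.real A - P.real B| ≤ 1
    rw [abs_le]; constructor <;> linarith
  have hbdd : BddAbove {x | ∃ A B : Set Ω, MeasurableSet[sigmaLE ξ k 0] A ∧
      MeasurableSet[sigmaGE ξ k r] B ∧ P A ≠ 0 ∧
      x = |(P (A ∩ B)).toReal / (P A).toReal - (P B).toReal|} := by
    refine ⟨1, ?_⟩
    rintro x ⟨A, B, -, -, -, rfl⟩
    exact hone A B
  by_cases h0 : P A = 0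
  · have h1 : P.real A = 0 := by simp [measureReal_def, h0]
    have h2 : P.real (A ∩ B) = 0 := by
      simp [measureReal_def, measure_mono_null Set.inter_subset_left h0]
    rw [h1, h2, zero_mul, sub_zero, abs_zero]
    -- the set of conditional discrepancies contains the one of `(univ, univ)`, which is `0`
    refine le_trans ?_ hphi
    refine le_csSup hbdd ⟨Set.univ, Set.univ, @MeasurableSet.univ _ (sigmaLE ξ k 0),
      @MeasurableSet.univ _ (sigmaGE ξ k r), by simp, by simp⟩
  · have hpos : 0 < P.real A := by
      rw [measureReal_def]; exact ENNReal.toReal_pos h0 (measure_ne_top P A)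
    have h1 : |P.real (A ∩ B) / P.real A - P.real B| ≤ phiMix ξ P r :=
      le_trans (le_csSup hbdd ⟨A, B, hA, hB, h0, rfl⟩) hphi
    have h2 : P.real (A ∩ B) - P.real A * P.real B
        = P.real A * (P.real (A ∩ B) / P.real A - P.real B) := by
      field_simp
    rw [h2, abs_mul, abs_of_pos hpos]
    calc P.real A * |P.real (A ∩ B) / P.real A - P.real B|
        ≤ 1 * |P.real (A ∩ B) / P.real A - P.real B| :=
          mul_le_mul_of_nonneg_right measureReal_le_one (abs_nonneg _)
      _ ≤ phiMix ξ P r := by rwa [one_mul]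

lemma StrictStationary.measureReal_shift [MeasurableSpace Ω] {d : ℕ} {E : Type*}
    [MeasurableSpace E] {ξ : (Fin d → ℤ) → Ω → E} {P : Measure Ω}
    (hmeas : ∀ i, Measurable (ξ i)) (hstat : StrictStationary ξ P) (t : Fin d → ℤ)
    {S : Set ((Fin d → ℤ) → E)} (hS : MeasurableSet S) :
    P.real {ω | (fun i => ξ (i + t) ω) ∈ S} = P.real {ω | (fun i => ξ i ω) ∈ S} := by
  have h := congrArg (fun ν => ν S) (hstat t)
  rw [Measure.map_apply (measurable_pi_lambda _ fun i => hmeas _) hS,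
    Measure.map_apply (measurable_pi_lambda _ fun i => hmeas _) hS] at h
  exact congrArg ENNReal.toReal h

/-- The lagged product `ξ_i^{(ν)} ξ_{i+j}^{(μ)}`, whose expectation is an entry of `γ(j)`. -/
def lagProd {d p : ℕ} (ξ : (Fin d → ℤ) → Ω → (Fin p → ℝ)) (j : Fin d → ℤ) (ν μ : Fin p)
    (i : Fin d → ℤ) (ω : Ω) : ℝ := ξ i ω ν * ξ (i + j) ω μ

lemma measurable_lagProd [MeasurableSpace Ω] {d p : ℕ} {ξ : (Fin d → ℤ) → Ω → (Fin p → ℝ)}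
    (hmeas : ∀ i, Measurable (ξ i)) (j : Fin d → ℤ) (ν μ : Fin p) (i : Fin d → ℤ) :
    Measurable (lagProd ξ j ν μ i) :=
  ((measurable_pi_apply ν).comp (hmeas i)).mul ((measurable_pi_apply μ).comp (hmeas (i + j)))

/-- Events on two lagged products are decorrelated at rate `φ(r)` once the sites are `r + 2|j_k|`
apart in direction `k`: both products look at a window of width `|j_k|`, and a shift moves the
first window to the half-space `{n_k ≤ 0}` and the second one to `{n_k ≥ r}`. -/
lemma abs_lagProd_event_le [MeasurableSpace Ω] {d p : ℕ} {P : Measure Ω} [IsProbabilityMeasure P]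
    {ξ : (Fin d → ℤ) → Ω → (Fin p → ℝ)} (hmeas : ∀ i, Measurable (ξ i))
    (hstat : StrictStationary ξ P) (j : Fin d → ℤ) (ν μ : Fin p) {r : ℤ} (hr : 0 < r)
    {a b : Fin d → ℤ} {k : Fin d} (hab : a k + (r + 2 * |j k|) ≤ b k)
    {B B' : Set ℝ} (hB : MeasurableSet B) (hB' : MeasurableSet B') :
    |P.real (lagProd ξ j ν μ a ⁻¹' B ∩ lagProd ξ j ν μ b ⁻¹' B')
      - P.real (lagProd ξ j ν μ a ⁻¹' B) * P.real (lagProd ξ j ν μ b ⁻¹' B')|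
      ≤ phiMix ξ P r := by
  obtain ⟨t, ht⟩ : ∃ t : Fin d → ℤ, t k = a k + |j k| := ⟨fun k => a k + |j k|, rfl⟩
  have hj1 := le_abs_self (j k)
  have hj2 := neg_abs_le (j k)
  -- the lagged product at site `c` as a function of the field shifted by `t`
  have hg : ∀ c : Fin d → ℤ, Measurable
      (fun x : (Fin d → ℤ) → Fin p → ℝ => x c ν * x (c + j) μ) := fun c => by fun_prop
  have hshift : ∀ c : Fin d → ℤ, ∀ ω,
      (fun i => ξ (i + t) ω) (c - t) ν * (fun i => ξ (i + t) ω) (c - t + j) μ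
        = lagProd ξ j ν μ c ω := by
    intro c ω
    simp only [lagProd]
    rw [sub_add_cancel, show c - t + j + t = c + j by abel]
  have e1 : P.real (lagProd ξ j ν μ a ⁻¹' B) = P.real (lagProd ξ j ν μ (a - t) ⁻¹' B) := by
    have := hstat.measureReal_shift hmeas t (hg (a - t) hB)
    simp only [Set.mem_preimage, hshift] at this
    exact this
  have e2 : P.real (lagProd ξ j ν μ b ⁻¹' B') = P.real (lagProd ξ j ν μ (b - t) ⁻¹' B') := by
    have := hstat.measureReal_shift hmeas t (hg (b - t) hB')
    simp only [Set.mem_preimage, hshift] at this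
    exact this
  have e3 : P.real (lagProd ξ j ν μ a ⁻¹' B ∩ lagProd ξ j ν μ b ⁻¹' B')
      = P.real (lagProd ξ j ν μ (a - t) ⁻¹' B ∩ lagProd ξ j ν μ (b - t) ⁻¹' B') := by
    have := hstat.measureReal_shift hmeas t ((hg (a - t) hB).inter (hg (b - t) hB'))
    simp only [Set.mem_inter_iff, Set.mem_preimage, hshift] at this
    exact this
  rw [e1, e2, e3]
  have mLE : ∀ i : Fin d → ℤ, i k ≤ 0 → Measurable[sigmaLE ξ k 0] (ξ i) := fun i hi =>
    Measurable.of_comap_le (le_iSup₂_of_le (f := fun (i : Fin d → ℤ)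
      (_ : i ∈ {i : Fin d → ℤ | i k ≤ 0}) => MeasurableSpace.comap (ξ i) inferInstance) i hi le_rfl)
  have mGE : ∀ i : Fin d → ℤ, r ≤ i k → Measurable[sigmaGE ξ k r] (ξ i) := fun i hi =>
    Measurable.of_comap_le (le_iSup₂_of_le (f := fun (i : Fin d → ℤ)
      (_ : i ∈ {i : Fin d → ℤ | r ≤ i k}) => MeasurableSpace.comap (ξ i) inferInstance) i hi le_rfl)
  refine abs_measureReal_inter_sub_mul_le_phiMix ξ P k hr ?_ ?_
  · have : Measurable[sigmaLE ξ k 0] (lagProd ξ j ν μ (a - t)) :=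
      Measurable.mul
        ((measurable_pi_apply ν).comp (mLE (a - t) (by simp only [Pi.sub_apply]; omega)))
        ((measurable_pi_apply μ).comp
          (mLE (a - t + j) (by simp only [Pi.sub_apply, Pi.add_apply]; omega)))
    exact this hB
  · have : Measurable[sigmaGE ξ k r] (lagProd ξ j ν μ (b - t)) :=
      Measurable.mul
        ((measurable_pi_apply ν).comp (mGE (b - t) (by simp only [Pi.sub_apply]; omega)))
        ((measurable_pi_apply μ).comp
          (mGE (b - t + j) (by simp only [Pi.sub_apply, Pi.add_apply]; omega)))
    exact this hB'

lemma map_lagProd [MeasurableSpace Ω] {d p : ℕ} {P : Measure Ω}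
    {ξ : (Fin d → ℤ) → Ω → (Fin p → ℝ)} (hmeas : ∀ i, Measurable (ξ i))
    (hstat : StrictStationary ξ P) (j : Fin d → ℤ) (ν μ : Fin p) (i : Fin d → ℤ) :
    P.map (lagProd ξ j ν μ i) = P.map (lagProd ξ j ν μ 0) := by
  have hg : Measurable (fun x : (Fin d → ℤ) → Fin p → ℝ => x 0 ν * x j μ) := by fun_prop
  have h := congrArg (Measure.map fun x : (Fin d → ℤ) → Fin p → ℝ => x 0 ν * x j μ) (hstat i)
  rw [Measure.map_map hg (measurable_pi_lambda _ fun i => hmeas _),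
    Measure.map_map hg (measurable_pi_lambda _ fun i => hmeas _)] at h
  convert h using 2
  · funext ω; simp [lagProd, add_comm]
  · funext ω; simp [lagProd]

lemma memLp_lagProd_zero [MeasurableSpace Ω] {d p : ℕ} {P : Measure Ω}
    {ξ : (Fin d → ℤ) → Ω → (Fin p → ℝ)} (hmeas : ∀ i, Measurable (ξ i))
    (hstat : StrictStationary ξ P) (hmom : ∀ k, Integrable (fun ω => (ξ 0 ω k) ^ 4) P)
    (j : Fin d → ℤ) (ν μ : Fin p) : MemLp (lagProd ξ j ν μ 0) 2 P := by
  have hj : Integrable (fun ω => (ξ j ω μ) ^ 4) P := by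
    have hg : Measurable (fun x : (Fin d → ℤ) → Fin p → ℝ => (x 0 μ) ^ 4) := by fun_prop
    have h1 : Integrable (fun x : (Fin d → ℤ) → Fin p → ℝ => (x 0 μ) ^ 4)
        (Measure.map (fun ω i => ξ i ω) P) := by
      rw [integrable_map_measure hg.aestronglyMeasurable
        (measurable_pi_lambda _ fun i => hmeas _).aemeasurable]
      exact hmom μ
    rw [← hstat j, integrable_map_measure hg.aestronglyMeasurable
        (measurable_pi_lambda _ fun i => hmeas _).aemeasurable] at h1
    simpa [Function.comp_def] using h1
  have hm := measurable_lagProd hmeas j ν μ 0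
  rw [memLp_two_iff_integrable_sq hm.aestronglyMeasurable]
  refine ((hmom ν).add hj).mono (hm.pow_const 2).aestronglyMeasurable
    (Eventually.of_forall fun ω => ?_)
  simp only [lagProd, zero_add, Pi.add_apply, Real.norm_eq_abs]
  rw [abs_of_nonneg (by positivity), abs_of_nonneg (by positivity)]
  nlinarith [sq_nonneg ((ξ 0 ω ν) ^ 2 - (ξ j ω μ) ^ 2), sq_nonneg ((ξ 0 ω ν) ^ 2),
    sq_nonneg ((ξ j ω μ) ^ 2)]

/-! ### A mean-square law of large numbers -/

lemma integral_centered_indicator_mul [MeasurableSpace Ω] {P : Measure Ω} [IsProbabilityMeasure P]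
    {A B : Set Ω} (hA : MeasurableSet A) (hB : MeasurableSet B) :
    ∫ ω, (A.indicator 1 ω - P.real A) * (B.indicator 1 ω - P.real B) ∂P
      = P.real (A ∩ B) - P.real A * P.real B := by
  have iA : Integrable (A.indicator (1 : Ω → ℝ)) P := (integrable_const 1).indicator hA
  have iB : Integrable (B.indicator (1 : Ω → ℝ)) P := (integrable_const 1).indicator hB
  have iAB : Integrable ((A ∩ B).indicator (1 : Ω → ℝ)) P :=
    (integrable_const 1).indicator (hA.inter hB)
  have h : ∀ ω, (A.indicator 1 ω - P.real A) * (B.indicator 1 ω - P.real B)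
      = (A ∩ B).indicator 1 ω - P.real B * A.indicator 1 ω - P.real A * B.indicator 1 ω
        + P.real A * P.real B := by
    intro ω
    rw [Set.inter_indicator_one, Pi.mul_apply]; ring
  simp_rw [h]
  have j1 : Integrable (fun ω => (A ∩ B).indicator (1 : Ω → ℝ) ω
      - P.real B * A.indicator (1 : Ω → ℝ) ω) P := iAB.sub (iA.const_mul _)
  have j2 : Integrable (fun ω => (A ∩ B).indicator (1 : Ω → ℝ) ω
      - P.real B * A.indicator (1 : Ω → ℝ) ω - P.real A * B.indicator (1 : Ω → ℝ) ω) P :=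
    j1.sub (iB.const_mul _)
  rw [integral_add j2 (integrable_const _), integral_sub j1 (iB.const_mul _),
    integral_sub iAB (iA.const_mul _), integral_const_mul, integral_const_mul,
    integral_indicator_one hA, integral_indicator_one hB, integral_indicator_one (hA.inter hB)]
  simp
  ring

/-- Decorrelation passes from events to simple functions by bilinearity, at the price of a constant
depending only on the simple function. -/
lemma abs_cov_simpleFunc_le [MeasurableSpace Ω] {P : Measure Ω} [IsProbabilityMeasure P]
    {X Z : Ω → ℝ} (hX : Measurable X) (hZ : Measurable Z) (s : SimpleFunc ℝ ℝ) {δ : ℝ}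
    (h : ∀ B B' : Set ℝ, MeasurableSet B → MeasurableSet B' →
      |P.real (X ⁻¹' B ∩ Z ⁻¹' B') - P.real (X ⁻¹' B) * P.real (Z ⁻¹' B')| ≤ δ) :
    |∫ ω, (s (X ω) - ∫ ω, s (X ω) ∂P) * (s (Z ω) - ∫ ω, s (Z ω) ∂P) ∂P|
      ≤ (∑ c ∈ s.range, |c|) ^ 2 * δ := by
  have hmb : ∀ (W : Ω → ℝ), Measurable W → ∀ c, MeasurableSet (W ⁻¹' (s ⁻¹' {c})) :=
    fun W hW c => hW (s.measurableSet_fiber c)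
  have hind : ∀ (W : Ω → ℝ), ∀ ω, s (W ω) = ∑ c ∈ s.range,
      c * (W ⁻¹' (s ⁻¹' {c})).indicator (1 : Ω → ℝ) ω := by
    intro W ω
    rw [Finset.sum_eq_single (s (W ω))]
    · simp [Set.indicator]
    · intro c _ hc
      simp [Set.indicator, hc.symm]
    · intro hn; exact absurd (s.mem_range_self _) hn
  have hI : ∀ (W : Ω → ℝ), Measurable W → ∀ c,
      Integrable ((W ⁻¹' (s ⁻¹' {c})).indicator (1 : Ω → ℝ)) P :=
    fun W hW c => (integrable_const 1).indicator (hmb W hW c)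
  have hcent : ∀ (W : Ω → ℝ), Measurable W → ∀ ω, s (W ω) - ∫ ω, s (W ω) ∂P = ∑ c ∈ s.range,
      c * ((W ⁻¹' (s ⁻¹' {c})).indicator (1 : Ω → ℝ) ω - P.real (W ⁻¹' (s ⁻¹' {c}))) := by
    intro W hW ω
    have h1 : ∫ ω, s (W ω) ∂P = ∑ c ∈ s.range, c * P.real (W ⁻¹' (s ⁻¹' {c})) := by
      simp_rw [hind W]
      rw [integral_finsetSum _ fun c _ => (hI W hW c).const_mul c]
      refine Finset.sum_congr rfl fun c _ => ?_
      rw [integral_const_mul, integral_indicator_one (hmb W hW c)]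
    rw [h1, hind W ω, ← Finset.sum_sub_distrib]
    exact Finset.sum_congr rfl fun c _ => by ring
  have hJ : ∀ c c', Integrable (fun ω =>
      ((X ⁻¹' (s ⁻¹' {c})).indicator (1 : Ω → ℝ) ω - P.real (X ⁻¹' (s ⁻¹' {c}))) *
      ((Z ⁻¹' (s ⁻¹' {c'})).indicator (1 : Ω → ℝ) ω - P.real (Z ⁻¹' (s ⁻¹' {c'})))) P := by
    intro c c'
    have mA : MemLp (fun ω => (X ⁻¹' (s ⁻¹' {c})).indicator (1 : Ω → ℝ) ω
        - P.real (X ⁻¹' (s ⁻¹' {c}))) 2 P :=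
      (memLp_indicator_const 2 (hmb X hX c) 1 (Or.inr (measure_ne_top _ _))).sub (memLp_const _)
    have mB : MemLp (fun ω => (Z ⁻¹' (s ⁻¹' {c'})).indicator (1 : Ω → ℝ) ω
        - P.real (Z ⁻¹' (s ⁻¹' {c'}))) 2 P :=
      (memLp_indicator_const 2 (hmb Z hZ c') 1 (Or.inr (measure_ne_top _ _))).sub (memLp_const _)
    exact mA.integrable_mul mB
  have key : ∫ ω, (s (X ω) - ∫ ω, s (X ω) ∂P) * (s (Z ω) - ∫ ω, s (Z ω) ∂P) ∂P
      = ∑ c ∈ s.range, ∑ c' ∈ s.range, (c * c') *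
        (P.real (X ⁻¹' (s ⁻¹' {c}) ∩ Z ⁻¹' (s ⁻¹' {c'}))
          - P.real (X ⁻¹' (s ⁻¹' {c})) * P.real (Z ⁻¹' (s ⁻¹' {c'}))) := by
    simp_rw [hcent X hX, hcent Z hZ, Finset.sum_mul_sum, mul_mul_mul_comm]
    rw [integral_finsetSum _ fun c _ => integrable_finsetSum _ fun c' _ => (hJ c c').const_mul _]
    refine Finset.sum_congr rfl fun c _ => ?_
    rw [integral_finsetSum _ fun c' _ => (hJ c c').const_mul _]
    refine Finset.sum_congr rfl fun c' _ => ?_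
    rw [integral_const_mul, integral_centered_indicator_mul (hmb X hX c) (hmb Z hZ c')]
  rw [key, sq, Finset.sum_mul_sum, Finset.sum_mul]
  refine (Finset.abs_sum_le_sum_abs _ _).trans (Finset.sum_le_sum fun c _ => ?_)
  rw [Finset.sum_mul]
  refine (Finset.abs_sum_le_sum_abs _ _).trans (Finset.sum_le_sum fun c' _ => ?_)
  rw [abs_mul, abs_mul]
  exact mul_le_mul_of_nonneg_left
    (h _ _ (s.measurableSet_fiber c) (s.measurableSet_fiber c')) (by positivity)

lemma integral_sq_sum_le_card_mul [MeasurableSpace Ω] {P : Measure Ω} {ι : Type*}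
    {b : ι → Ω → ℝ} (hb : ∀ i, MemLp (b i) 2 P) {η : ℝ} (hη : ∀ i, ∫ ω, b i ω ^ 2 ∂P ≤ η)
    (S : Finset ι) : ∫ ω, (∑ i ∈ S, b i ω) ^ 2 ∂P ≤ (#S : ℝ) ^ 2 * η := by
  have hsq : ∀ i, Integrable (fun ω => b i ω ^ 2) P := fun i => (hb i).integrable_sq
  calc ∫ ω, (∑ i ∈ S, b i ω) ^ 2 ∂P
      ≤ ∫ ω, (#S : ℝ) * ∑ i ∈ S, b i ω ^ 2 ∂P := by
        refine integral_mono (memLp_finsetSum S fun i _ => hb i).integrable_sq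
          ((integrable_finsetSum _ fun i _ => hsq i).const_mul _) fun ω => ?_
        exact sq_sum_le_card_mul_sum_sq
    _ = (#S : ℝ) * ∑ i ∈ S, ∫ ω, b i ω ^ 2 ∂P := by
        rw [integral_const_mul, integral_finsetSum _ fun i _ => hsq i]
    _ ≤ (#S : ℝ) * ∑ _i ∈ S, η := by
        gcongr with i hi; exact hη i
    _ = (#S : ℝ) ^ 2 * η := by simp; ring

/-- Second moment of a sum whose correlations are at most `C` everywhere and at most `δ` off
neighbourhoods of size `M`. -/
lemma integral_sq_sum_le_of_decorrelated [MeasurableSpace Ω] {P : Measure Ω} {ι : Type*}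
    {a : ι → Ω → ℝ} (ha : ∀ i, MemLp (a i) 2 P) {C δ : ℝ} {M : ℕ} (hC0 : 0 ≤ C) (hδ : 0 ≤ δ)
    (nb : ι → Finset ι) (hnb : ∀ i, #(nb i) ≤ M)
    (hC : ∀ i k, |∫ ω, a i ω * a k ω ∂P| ≤ C)
    (hfar : ∀ i, ∀ k ∉ nb i, |∫ ω, a i ω * a k ω ∂P| ≤ δ) (S : Finset ι) :
    ∫ ω, (∑ i ∈ S, a i ω) ^ 2 ∂P ≤ (#S : ℝ) * (M * C) + (#S : ℝ) ^ 2 * δ := by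
  classical
  have hI : ∀ i k, Integrable (fun ω => a i ω * a k ω) P := fun i k => (ha i).integrable_mul (ha k)
  have h1 : ∫ ω, (∑ i ∈ S, a i ω) ^ 2 ∂P = ∑ i ∈ S, ∑ k ∈ S, ∫ ω, a i ω * a k ω ∂P := by
    simp_rw [sq, Finset.sum_mul_sum]
    rw [integral_finsetSum _ fun i _ => integrable_finsetSum _ fun k _ => hI i k]
    exact Finset.sum_congr rfl fun i _ => integral_finsetSum _ fun k _ => hI i k
  have h2 : ∀ i ∈ S, ∑ k ∈ S, ∫ ω, a i ω * a k ω ∂P ≤ M * C + #S * δ := by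
    intro i _
    rw [← Finset.sum_filter_add_sum_filter_not S (· ∈ nb i)]
    refine add_le_add ?_ ?_
    · refine (Finset.sum_le_card_nsmul _ _ C fun k _ => (le_abs_self _).trans (hC i k)).trans ?_
      rw [nsmul_eq_mul]
      have : #(S.filter (· ∈ nb i)) ≤ M :=
        (Finset.card_le_card fun k hk => (Finset.mem_filter.mp hk).2).trans (hnb i)
      gcongr
    · refine (Finset.sum_le_card_nsmul _ _ δ fun k hk =>
        (le_abs_self _).trans (hfar i k (Finset.mem_filter.mp hk).2)).trans ?_
      rw [nsmul_eq_mul]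
      gcongr
      exact Finset.filter_subset _ _
  rw [h1]
  refine (Finset.sum_le_card_nsmul _ _ _ h2).trans (le_of_eq ?_)
  rw [nsmul_eq_mul]; ring

/-- A mean-square law of large numbers for identically distributed square-integrable variables,
assuming only that events are decorrelated up to `δ` outside neighbourhoods of size `M(δ)`. The
variables are split into a simple function of themselves, whose correlations are controlled by
events, and a remainder which is uniformly small in `L²`. -/
lemma exists_card_integral_sq_average_le [MeasurableSpace Ω] {P : Measure Ω}
    [IsProbabilityMeasure P] {ι : Type*} {Y : ι → Ω → ℝ} (hY : ∀ i, Measurable (Y i))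
    {lam : Measure ℝ} (hlaw : ∀ i, P.map (Y i) = lam) (hL2 : MemLp (fun x : ℝ => x) 2 lam)
    (hdec : ∀ δ : ℝ, 0 < δ → ∃ (M : ℕ) (nb : ι → Finset ι), (∀ i, #(nb i) ≤ M) ∧
      ∀ i, ∀ k ∉ nb i, ∀ B B' : Set ℝ, MeasurableSet B → MeasurableSet B' →
        |P.real (Y i ⁻¹' B ∩ Y k ⁻¹' B') - P.real (Y i ⁻¹' B) * P.real (Y k ⁻¹' B')| ≤ δ)
    {ε : ℝ} (hε : 0 < ε) :
    ∃ L : ℕ, ∀ S : Finset ι, L ≤ #S →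
      ∫ ω, ((#S : ℝ)⁻¹ * ∑ i ∈ S, Y i ω - ∫ x, x ∂lam) ^ 2 ∂P ≤ ε := by
  have tr : ∀ i (f : ℝ → ℝ), Measurable f → ∫ ω, f (Y i ω) ∂P = ∫ x, f x ∂lam := by
    intro i f hf
    rw [← hlaw i, integral_map (hY i).aemeasurable hf.aestronglyMeasurable]
  have trL : ∀ i (f : ℝ → ℝ), MemLp f 2 lam → MemLp (fun ω => f (Y i ω)) 2 P := by
    intro i f hf
    rw [← hlaw i] at hf
    exact hf.comp_of_map (hY i).aemeasurable
  -- three error terms of size `ε / 8` each are doubled by `(a + b)² ≤ 2 (a² + b²)`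
  obtain ⟨s, hs, hsL⟩ := hL2.exists_simpleFunc_eLpNorm_sub_lt (by simp)
    (ε := ENNReal.ofReal (√(ε / 8))) (by simp; positivity)
  have hT : MemLp (fun x => x - s x) 2 lam := hL2.sub hsL
  have hTsq : ∫ x, (x - s x) ^ 2 ∂lam ≤ ε / 8 := by
    have e : eLpNorm (fun x => x - s x) 2 lam ≤ ENNReal.ofReal (√(ε / 8)) := hs.le
    rw [hT.eLpNorm_eq_integral_rpow_norm (by simp) (by simp)] at e
    rw [ENNReal.ofReal_le_ofReal_iff (by positivity)] at e
    simp only [ENNReal.toReal_ofNat, Real.norm_eq_abs, Real.rpow_ofNat, sq_abs] at e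
    rw [show (2 : ℝ)⁻¹ = 1 / 2 by norm_num, ← Real.sqrt_eq_rpow] at e
    exact (Real.sqrt_le_sqrt_iff (by positivity)).mp e
  set m : ℝ := ∫ x, x ∂lam with hm
  set m' : ℝ := ∫ x, s x ∂lam with hm'
  set K : ℝ := (∑ c ∈ s.range, |c|) ^ 2 with hK
  have hK0 : 0 ≤ K := sq_nonneg _
  have hδ : 0 < ε / (8 * (K + 1)) := by positivity
  obtain ⟨M, nb, hnb, hfar⟩ := hdec _ hδ
  have haL : ∀ i, MemLp (fun ω => s (Y i ω) - m') 2 P := fun i =>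
    (trL i s hsL).sub (memLp_const _)
  have hbL : ∀ i, MemLp (fun ω => (Y i ω - s (Y i ω)) - (m - m')) 2 P := fun i =>
    (trL i _ hT).sub (memLp_const _)
  have hcov : ∀ i k (δ : ℝ), (∀ B B' : Set ℝ, MeasurableSet B → MeasurableSet B' →
        |P.real (Y i ⁻¹' B ∩ Y k ⁻¹' B') - P.real (Y i ⁻¹' B) * P.real (Y k ⁻¹' B')| ≤ δ) →
      |∫ ω, (s (Y i ω) - m') * (s (Y k ω) - m') ∂P| ≤ K * δ := by
    intro i k δ h
    have := abs_cov_simpleFunc_le (hY i) (hY k) s h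
    rwa [tr i s s.measurable, tr k s s.measurable] at this
  have hall : ∀ i k, |∫ ω, (s (Y i ω) - m') * (s (Y k ω) - m') ∂P| ≤ K := by
    intro i k
    have := hcov i k 1 fun B B' _ _ => ?_
    · rwa [mul_one] at this
    · have h1 : P.real (Y i ⁻¹' B ∩ Y k ⁻¹' B') ≤ 1 := measureReal_le_one
      have h2 : 0 ≤ P.real (Y i ⁻¹' B ∩ Y k ⁻¹' B') := measureReal_nonneg
      have h3 : P.real (Y i ⁻¹' B) * P.real (Y k ⁻¹' B') ≤ 1 :=
        mul_le_one₀ measureReal_le_one measureReal_nonneg measureReal_le_one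
      have h4 : 0 ≤ P.real (Y i ⁻¹' B) * P.real (Y k ⁻¹' B') := by positivity
      rw [abs_le]; constructor <;> linarith
  -- centring does not increase the second moment of the remainder
  have hb2 : ∀ i, ∫ ω, ((Y i ω - s (Y i ω)) - (m - m')) ^ 2 ∂P ≤ ε / 8 := by
    intro i
    have h1 : ∫ ω, (Y i ω - s (Y i ω)) ∂P = m - m' := by
      rw [integral_sub ((trL i _ hL2).integrable one_le_two)
        ((trL i _ hsL).integrable one_le_two), tr i (fun x => x) measurable_id,
        tr i s s.measurable]
    have h2 : ∫ ω, (Y i ω - s (Y i ω)) ^ 2 ∂P = ∫ x, (x - s x) ^ 2 ∂lam :=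
      tr i (fun x => (x - s x) ^ 2) ((measurable_id.sub s.measurable).pow_const 2)
    have hmeasT : AEStronglyMeasurable (fun ω => Y i ω - s (Y i ω)) P :=
      (trL i _ hT).aestronglyMeasurable
    have h3 := ProbabilityTheory.variance_le_expectation_sq hmeasT
    rw [ProbabilityTheory.variance_eq_integral hmeasT.aemeasurable, h1] at h3
    refine h3.trans (le_trans (le_of_eq ?_) hTsq)
    rw [← h2]; rfl
  obtain ⟨L, hL⟩ := exists_nat_gt (8 * (M * K) / ε)
  refine ⟨L + 1, fun S hS => ?_⟩
  have hN : (L : ℝ) + 1 ≤ #S := by exact_mod_cast hS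
  have hNpos : (0 : ℝ) < #S := lt_of_lt_of_le (by positivity) hN
  have hA := integral_sq_sum_le_of_decorrelated haL hK0
    (mul_nonneg hK0 hδ.le) nb hnb hall (fun i k hk => hcov i k _ (hfar i k hk)) S
  have hB := integral_sq_sum_le_card_mul hbL hb2 S
  have hdecomp : ∀ ω, (#S : ℝ)⁻¹ * ∑ i ∈ S, Y i ω - m = (#S : ℝ)⁻¹ *
      ((∑ i ∈ S, (s (Y i ω) - m')) + ∑ i ∈ S, ((Y i ω - s (Y i ω)) - (m - m'))) := by
    intro ω
    rw [← Finset.sum_add_distrib]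
    have : ∀ i, (s (Y i ω) - m') + ((Y i ω - s (Y i ω)) - (m - m')) = Y i ω - m := by
      intro i; ring
    simp_rw [this]
    rw [Finset.sum_sub_distrib, Finset.sum_const, nsmul_eq_mul]
    field_simp
  have iA := (memLp_finsetSum S fun i _ => haL i).integrable_sq
  have iB := (memLp_finsetSum S fun i _ => hbL i).integrable_sq
  have hAB := (memLp_finsetSum S fun i _ => haL i).add (memLp_finsetSum S fun i _ => hbL i)
  have hKδ : K * (ε / (8 * (K + 1))) ≤ ε / 8 := by
    rw [mul_div_assoc', div_le_div_iff₀ (by positivity) (by norm_num)]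
    nlinarith
  have hMK : M * K ≤ #S * (ε / 8) := by
    rw [div_lt_iff₀ hε] at hL
    nlinarith
  calc ∫ ω, ((#S : ℝ)⁻¹ * ∑ i ∈ S, Y i ω - m) ^ 2 ∂P
      ≤ ∫ ω, ((#S : ℝ)⁻¹ ^ 2 * 2) * ((∑ i ∈ S, (s (Y i ω) - m')) ^ 2
          + (∑ i ∈ S, ((Y i ω - s (Y i ω)) - (m - m'))) ^ 2) ∂P := by
        simp_rw [hdecomp]
        refine integral_mono (hAB.const_mul _).integrable_sq ((iA.add iB).const_mul _) fun ω => ?_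
        simp only
        rw [mul_pow, mul_assoc]
        gcongr
        exact add_sq_le
    _ = ((#S : ℝ)⁻¹ ^ 2 * 2) * (∫ ω, (∑ i ∈ S, (s (Y i ω) - m')) ^ 2 ∂P
          + ∫ ω, (∑ i ∈ S, ((Y i ω - s (Y i ω)) - (m - m'))) ^ 2 ∂P) := by
        rw [integral_const_mul, integral_add iA iB]
    _ ≤ ((#S : ℝ)⁻¹ ^ 2 * 2) * ((#S : ℝ) ^ 2 * (ε / 8) + (#S : ℝ) ^ 2 * (ε / 8)
          + (#S : ℝ) ^ 2 * (ε / 8)) := by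
        gcongr
        refine hA.trans (add_le_add ?_ ?_)
        · calc (#S : ℝ) * (M * K) ≤ #S * (#S * (ε / 8)) := by gcongr
            _ = _ := by ring
        · gcongr
    _ ≤ ε := by
        field_simp
        linarith

/-! ### Sample autocovariances -/

lemma tendsto_card_boxJ {q : ℕ} [Nonempty (Fin q)] (j : Fin q → ℤ) :
    Tendsto (fun n : Fin q → ℕ => #(boxJ q n j)) atTop atTop := by
  rw [tendsto_atTop]
  intro L
  filter_upwards [eventually_ge_atTop (fun k => L + 2 * (j k).natAbs)] with n hn
  -- a translate of the cube with side `L`, at distance at least `|j_k|` from the faces of the box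
  have hsub : Finset.Icc (fun k => 1 + |j k|) (fun k => (L : ℤ) + |j k|) ⊆ boxJ q n j := by
    intro i hi
    rw [Finset.mem_Icc, Pi.le_def, Pi.le_def] at hi
    have hbd : ∀ k, 1 ≤ i k ∧ i k ≤ n k ∧ 1 ≤ i k + j k ∧ i k + j k ≤ n k := by
      intro k
      have h1 := hi.1 k
      have h2 := hi.2 k
      have h3 := hn k
      simp only [Int.abs_eq_natAbs] at h1 h2 h3
      omega
    simp only [boxJ, _root_.box, Finset.mem_filter, Finset.mem_Icc, Pi.le_def, Pi.add_apply, Pi.one_apply]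
    exact ⟨⟨fun k => (hbd k).1, fun k => (hbd k).2.1⟩, fun k => (hbd k).2.2.1,
      fun k => (hbd k).2.2.2⟩
  refine le_trans ?_ (Finset.card_le_card hsub)
  rw [Pi.card_Icc]
  simp only [Int.card_Icc]
  have : ∀ k, ((L : ℤ) + |j k| + 1 - (1 + |j k|)).toNat = L := fun k => by omega
  simp only [this, Finset.prod_const, Finset.card_univ]
  exact Nat.le_self_pow Fintype.card_ne_zero L

lemma acov_eq_integral_map [MeasurableSpace Ω] {d p : ℕ} {P : Measure Ω}
    {ξ : (Fin d → ℤ) → Ω → (Fin p → ℝ)} (hmeas : ∀ i, Measurable (ξ i)) (j : Fin d → ℤ)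
    (ν μ : Fin p) : acov ξ P j ν μ = ∫ x, x ∂(P.map (lagProd ξ j ν μ 0)) := by
  rw [integral_map (f := fun x : ℝ => x) (measurable_lagProd hmeas j ν μ 0).aemeasurable
    measurable_id.aestronglyMeasurable]
  simp [acov, lagProd]

lemma memLp_acovHat_sub [MeasurableSpace Ω] {q p : ℕ} {P : Measure Ω} [IsProbabilityMeasure P]
    {ξ : (Fin q → ℤ) → Ω → (Fin p → ℝ)} (hmeas : ∀ i, Measurable (ξ i))
    (hstat : StrictStationary ξ P) (hmom : ∀ k, Integrable (fun ω => (ξ 0 ω k) ^ 4) P)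
    (j : Fin q → ℤ) (ν μ : Fin p) (n : Fin q → ℕ) :
    MemLp (fun ω => acovHat ξ n j ω ν μ - acov ξ P j ν μ) 2 P := by
  have hL : ∀ i, MemLp (lagProd ξ j ν μ i) 2 P := by
    intro i
    have h := memLp_lagProd_zero hmeas hstat hmom j ν μ
    have hm := fun i => (measurable_lagProd hmeas j ν μ i).aemeasurable (μ := P)
    have h0 : MemLp (fun x : ℝ => x) 2 (P.map (lagProd ξ j ν μ 0)) :=
      (memLp_map_measure_iff measurable_id.aestronglyMeasurable (hm 0)).mpr h
    rw [← map_lagProd hmeas hstat j ν μ i] at h0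
    exact h0.comp_of_map (hm i)
  exact ((memLp_finsetSum (boxJ q n j) fun i _ => hL i).const_mul _).sub (memLp_const _)

lemma tendsto_integral_sq_acovHat_sub [MeasurableSpace Ω] {q p : ℕ} [Nonempty (Fin q)]
    (P : Measure Ω) [IsProbabilityMeasure P]
    {ξ : (Fin q → ℤ) → Ω → (Fin p → ℝ)} (hmeas : ∀ i, Measurable (ξ i))
    (hstat : StrictStationary ξ P)
    (hmix : Tendsto (fun r : ℕ => phiMix ξ P (r : ℤ)) atTop (𝓝 0))
    (hmom : ∀ k, Integrable (fun ω => (ξ 0 ω k) ^ 4) P) (j : Fin q → ℤ) (ν μ : Fin p) :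
    Tendsto (fun n : Fin q → ℕ =>
      ∫ ω, (acovHat ξ n j ω ν μ - acov ξ P j ν μ) ^ 2 ∂P) atTop (𝓝 0) := by
  have hm := measurable_lagProd hmeas j ν μ
  have hdec : ∀ δ : ℝ, 0 < δ → ∃ (M : ℕ) (nb : (Fin q → ℤ) → Finset (Fin q → ℤ)),
      (∀ i, #(nb i) ≤ M) ∧
      ∀ i, ∀ k ∉ nb i, ∀ B B' : Set ℝ, MeasurableSet B → MeasurableSet B' →
        |P.real (lagProd ξ j ν μ i ⁻¹' B ∩ lagProd ξ j ν μ k ⁻¹' B')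
          - P.real (lagProd ξ j ν μ i ⁻¹' B) * P.real (lagProd ξ j ν μ k ⁻¹' B')| ≤ δ := by
    intro δ hδ
    obtain ⟨r, hrδ, hr⟩ := ((hmix.eventually_le_const hδ).and (eventually_gt_atTop 0)).exists
    have hr' : (0 : ℤ) < r := by exact_mod_cast hr
    refine ⟨∏ l, (2 * ((r : ℤ) + 2 * |j l|) + 1).toNat,
      fun i => Finset.Icc (fun l => i l - (r + 2 * |j l|)) (fun l => i l + (r + 2 * |j l|)),
      fun i => ?_, fun i k hk B B' hB hB' => ?_⟩
    · rw [Pi.card_Icc]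
      refine le_of_eq (Finset.prod_congr rfl fun l _ => ?_)
      rw [Int.card_Icc]
      congr 1
      ring
    · obtain ⟨l, hl⟩ : ∃ l, i l + (r + 2 * |j l|) ≤ k l ∨ k l + (r + 2 * |j l|) ≤ i l := by
        by_contra! hcon
        refine hk (Finset.mem_Icc.mpr ⟨fun l => ?_, fun l => ?_⟩)
        · have := (hcon l).2; simp only; omega
        · have := (hcon l).1; simp only; omega
      refine le_trans ?_ hrδ
      rcases hl with hl | hl
      · exact abs_lagProd_event_le hmeas hstat j ν μ hr' hl hB hB'
      · rw [Set.inter_comm, mul_comm]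
        exact abs_lagProd_event_le hmeas hstat j ν μ hr' hl hB' hB
  have hL2 : MemLp (fun x : ℝ => x) 2 (P.map (lagProd ξ j ν μ 0)) :=
    (memLp_map_measure_iff measurable_id.aestronglyMeasurable (hm 0).aemeasurable).mpr
      (memLp_lagProd_zero hmeas hstat hmom j ν μ)
  rw [Metric.tendsto_nhds]
  intro ε hε
  obtain ⟨L, hL⟩ := exists_card_integral_sq_average_le hm (map_lagProd hmeas hstat j ν μ) hL2
    hdec (half_pos hε)
  filter_upwards [(tendsto_card_boxJ j).eventually_ge_atTop L] with n hn
  have h := hL (boxJ q n j) hn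
  rw [← acov_eq_integral_map hmeas] at h
  have h' : ∫ ω, (acovHat ξ n j ω ν μ - acov ξ P j ν μ) ^ 2 ∂P ≤ ε / 2 := h
  rw [Real.dist_eq, sub_zero, abs_of_nonneg (integral_nonneg fun ω => sq_nonneg _)]
  linarith

lemma integral_abs_le_sqrt_integral_sq [MeasurableSpace Ω] {P : Measure Ω}
    [IsProbabilityMeasure P] {X : Ω → ℝ} (hX : MemLp X 2 P) :
    ∫ ω, |X ω| ∂P ≤ √(∫ ω, X ω ^ 2 ∂P) := by
  refine Real.le_sqrt_of_sq_le ?_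
  have hX' : MemLp (fun ω => |X ω|) 2 P := hX.abs
  have h := ProbabilityTheory.variance_nonneg (fun ω => |X ω|) P
  rw [ProbabilityTheory.variance_eq_sub hX'] at h
  simpa [Pi.pow_apply, sq_abs] using h

lemma norm_le_sum_norm_apply {ι : Type*} [Fintype ι] {E : Type*} [SeminormedAddCommGroup E]
    (x : ι → E) : ‖x‖ ≤ ∑ i, ‖x i‖ :=
  (pi_norm_le_iff_of_nonneg (by positivity)).mpr fun i =>
    Finset.single_le_sum (f := fun i => ‖x i‖) (fun _ _ => norm_nonneg _) (Finset.mem_univ i)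

/-- Corollary: consistency of the sample autocovariances. -/
theorem acovHat_consistent
    {q p : ℕ} [Nonempty (Fin q)] (hp : 0 < p)
    [MeasurableSpace Ω] (P : Measure Ω) [IsProbabilityMeasure P]
    (ξ : (Fin q → ℤ) → Ω → (Fin p → ℝ))
    (hmeas : ∀ i, Measurable (ξ i))
    (hstat : StrictStationary ξ P)
    (hmix : Tendsto (fun r : ℕ => phiMix ξ P (r : ℤ)) atTop (𝓝 0))
    (hmean : ∀ k, ∫ ω, ξ 0 ω k ∂P = 0)
    (hmom : ∀ k, Integrable (fun ω => (ξ 0 ω k) ^ 4) P)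
    (hphisum : Summable (fun r : ℕ => (r : ℝ) ^ (q - 1) * Real.sqrt (phiMix ξ P (r : ℤ))))
    (j : Fin q → ℤ) :
    (p = 1 → ∀ ν μ : Fin p,
      Tendsto (fun n : Fin q → ℕ =>
        ∫ ω, (acovHat ξ n j ω ν μ - acov ξ P j ν μ) ^ 2 ∂P) atTop (𝓝 0)) ∧
    (1 < p →
      Tendsto (fun n : Fin q → ℕ =>
        ∫ ω, ‖acovHat ξ n j ω - acov ξ P j‖ ∂P) atTop (𝓝 0)) ∧
    (∀ ε : ℝ, 0 < ε →
      Tendsto (fun n : Fin q → ℕ =>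
        P {ω | ε < ‖acovHat ξ n j ω - acov ξ P j‖}) atTop (𝓝 0)) := by
  have hent := fun ν μ => tendsto_integral_sq_acovHat_sub P hmeas hstat hmix hmom j ν μ
  have hL2 := fun n ν μ => memLp_acovHat_sub (P := P) hmeas hstat hmom j ν μ n
  have hnormI : ∀ n : Fin q → ℕ,
      Integrable (fun ω => ‖acovHat ξ n j ω - acov ξ P j‖) P := by
    intro n
    refine Integrable.norm ?_
    exact Integrable.of_eval fun ν => Integrable.of_eval fun μ =>
      (hL2 n ν μ).integrable one_le_two
  have hL1 : Tendsto (fun n : Fin q → ℕ =>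
        ∫ ω, ‖acovHat ξ n j ω - acov ξ P j‖ ∂P) atTop (𝓝 0) := by
    have hsum : Tendsto (fun n : Fin q → ℕ => ∑ ν, ∑ μ,
        √(∫ ω, (acovHat ξ n j ω ν μ - acov ξ P j ν μ) ^ 2 ∂P)) atTop (𝓝 0) := by
      have h := tendsto_finsetSum (univ : Finset (Fin p)) fun ν _ =>
        tendsto_finsetSum (univ : Finset (Fin p)) fun μ _ => (hent ν μ).sqrt
      simpa using h
    refine squeeze_zero (fun n => integral_nonneg fun ω => norm_nonneg _) (fun n => ?_) hsum
    have hI : ∀ ν μ, Integrable (fun ω => |acovHat ξ n j ω ν μ - acov ξ P j ν μ|) P :=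
      fun ν μ => ((hL2 n ν μ).integrable one_le_two).abs
    calc ∫ ω, ‖acovHat ξ n j ω - acov ξ P j‖ ∂P
        ≤ ∫ ω, ∑ ν, ∑ μ, |acovHat ξ n j ω ν μ - acov ξ P j ν μ| ∂P := by
          refine integral_mono (hnormI n)
            (integrable_finsetSum _ fun ν _ => integrable_finsetSum _ fun μ _ => hI ν μ)
            fun ω => ?_
          refine (norm_le_sum_norm_apply _).trans (Finset.sum_le_sum fun ν _ => ?_)
          exact norm_le_sum_norm_apply _
      _ = ∑ ν, ∑ μ, ∫ ω, |acovHat ξ n j ω ν μ - acov ξ P j ν μ| ∂P := by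
          rw [integral_finsetSum _ fun ν _ => integrable_finsetSum _ fun μ _ => hI ν μ]
          exact Finset.sum_congr rfl fun ν _ => integral_finsetSum _ fun μ _ => hI ν μ
      _ ≤ _ := Finset.sum_le_sum fun ν _ => Finset.sum_le_sum fun μ _ =>
          integral_abs_le_sqrt_integral_sq (hL2 n ν μ)
  refine ⟨fun _ => hent, fun _ => hL1, fun ε hε => ?_⟩
  have hbound : Tendsto (fun n : Fin q → ℕ => ENNReal.ofReal
      ((∫ ω, ‖acovHat ξ n j ω - acov ξ P j‖ ∂P) / ε)) atTop (𝓝 0) := by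
    simpa using ENNReal.tendsto_ofReal (hL1.div_const ε)
  refine tendsto_of_tendsto_of_tendsto_of_le_of_le tendsto_const_nhds hbound
    (fun n => zero_le) fun n => ?_
  have hmk := mul_meas_ge_le_integral_of_nonneg (μ := P)
    (Eventually.of_forall fun ω => norm_nonneg (acovHat ξ n j ω - acov ξ P j)) (hnormI n) ε
  have hle : P.real {ω | ε < ‖acovHat ξ n j ω - acov ξ P j‖}
      ≤ (∫ ω, ‖acovHat ξ n j ω - acov ξ P j‖ ∂P) / ε := by
    rw [le_div_iff₀ hε, mul_comm]
    refine le_trans (mul_le_mul_of_nonneg_left ?_ hε.le) hmk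
    exact measureReal_mono fun ω hω => le_of_lt (show ε < _ from hω)
  change P _ ≤ _
  rw [← ofReal_measureReal]
  exact ENNReal.ofReal_le_ofReal hle

end
end
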